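/- arXiv:1904.00538 — 2 statements merged into one kernel-verified Lean document; each statement's English description precedes it below -/
import Mathlib

section
/- There exist a constant C > 0 and M₀ such that for all m ≥ M₀ and all n ≥ m - 1 + ⌊m^{2/3}⌋, every mechanism J on tie-free profiles that is both ordinal and truthful satisfies ratio_U(J) ≤ C · m^{-2/3}; equivalently, there exists a tie-free profile u ∈ U^n with E[Wel(J(u),u)] ≤ C · m^{-2/3} · Wel(RV(u),u). -/
open Finset

/-- A normalized preference function: maps into `[0,1]` and attains both `0` and `1`. -/
def IsPref {m : ℕ} (u : Fin m → ℝ) : Prop :=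
  (∀ j, 0 ≤ u j ∧ u j ≤ 1) ∧ (∃ j, u j = 0) ∧ (∃ j, u j = 1)

/-- A tie-free normalized preference function. -/
def IsPrefU {m : ℕ} (u : Fin m → ℝ) : Prop :=
  IsPref u ∧ Function.Injective u

/-- A profile of normalized preference functions. -/
def IsProfile {n m : ℕ} (u : Fin n → Fin m → ℝ) : Prop :=
  ∀ i, IsPref (u i)

/-- A tie-free profile. -/
def IsProfileU {n m : ℕ} (u : Fin n → Fin m → ℝ) : Prop :=
  ∀ i, IsPrefU (u i)

/-- `p` is a probability distribution over the `m` candidates. -/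
def IsDist {m : ℕ} (p : Fin m → ℝ) : Prop :=
  (∀ j, 0 ≤ p j) ∧ ∑ j, p j = 1

/-- Social welfare of candidate `j` under profile `u`. -/
def Wel {n m : ℕ} (j : Fin m) (u : Fin n → Fin m → ℝ) : ℝ :=
  ∑ i, u i j

/-- Range voting: the candidate of maximal social welfare, ties broken
toward the smaller index. -/
noncomputable def RV {n m : ℕ} (hm : 0 < m) (u : Fin n → Fin m → ℝ) : Fin m :=
  (Finset.univ.filter fun j => ∀ j', Wel j' u ≤ Wel j u).min' (by
    obtain ⟨j, -, hj⟩ := Finset.exists_max_image (Finset.univ : Finset (Fin m))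
      (fun j => Wel j u) ⟨⟨0, hm⟩, Finset.mem_univ _⟩
    exact ⟨j, Finset.mem_filter.2 ⟨Finset.mem_univ _, fun j' => hj j' (Finset.mem_univ _)⟩⟩)

/-- Expected social welfare of a randomized mechanism `J` (given as the map
sending a profile to the probability of each candidate winning). -/
noncomputable def expWel {n m : ℕ} (J : (Fin n → Fin m → ℝ) → Fin m → ℝ)
    (u : Fin n → Fin m → ℝ) : ℝ :=
  ∑ j, J u j * Wel j u

/-- Rank of candidate `j` in preference `v`, ties broken in favor of the
smaller candidate index (the most preferred candidate has rank 1). -/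
noncomputable def rnk {m : ℕ} (v : Fin m → ℝ) (j : Fin m) : ℕ :=
  (Finset.univ.filter fun j' => v j < v j' ∨ (v j' = v j ∧ j' ≤ j)).card

/-- The mechanism `J^{1,q}`: pick a voter uniformly at random, then a winner
uniformly at random among that voter's `q` most preferred candidates. -/
noncomputable def Jone (q : ℕ) {n m : ℕ} (u : Fin n → Fin m → ℝ) : Fin m → ℝ :=
  fun j => (∑ i : Fin n, if rnk (u i) j ≤ q then ((q : ℝ))⁻¹ else 0) / (n : ℝ)

/-- `⌊m^{1/3}⌋`. -/
noncomputable def mroot3 (m : ℕ) : ℕ := ⌊(m : ℝ) ^ ((1 : ℝ)/3)⌋₊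

/-- The mechanism `J*`, running `J^{1,1}` and `J^{1,⌊m^{1/3}⌋}` each with
probability `1/2`. -/
noncomputable def Jstar {n m : ℕ} (u : Fin n → Fin m → ℝ) : Fin m → ℝ :=
  fun j => (Jone 1 u j + Jone (mroot3 m) u j) / 2

/-- Voter with preference `v` prefers `j₀` to `j₁` (ties toward the smaller
candidate index). -/
def Prefers {m : ℕ} (v : Fin m → ℝ) (j₀ j₁ : Fin m) : Prop :=
  v j₁ < v j₀ ∨ (v j₀ = v j₁ ∧ j₀ < j₁)

noncomputable instance {m : ℕ} (v : Fin m → ℝ) (j₀ j₁ : Fin m) :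
    Decidable (Prefers v j₀ j₁) := by unfold Prefers; infer_instance

/-- The mechanism `J^{2,q}`: pick two distinct candidates uniformly at random,
let each voter vote for the one it prefers; if one of the two gets at least `q`
votes it wins, otherwise the winner is one of the two by a fair coin. -/
noncomputable def Jtwo (q : ℕ) {n m : ℕ} (u : Fin n → Fin m → ℝ) : Fin m → ℝ :=
  fun j =>
    (∑ j₀ : Fin m, ∑ j₁ : Fin m,
      if j₀ = j₁ then 0
      else
        if q ≤ (Finset.univ.filter fun i => Prefers (u i) j₀ j₁).card then
          (if j = j₀ then (1 : ℝ) else 0)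
        else if q ≤ n - (Finset.univ.filter fun i => Prefers (u i) j₀ j₁).card then
          (if j = j₁ then (1 : ℝ) else 0)
        else ((if j = j₀ then (1 : ℝ)/2 else 0) + (if j = j₁ then (1 : ℝ)/2 else 0)))
      / ((m * (m - 1) : ℕ) : ℝ)

/-- `J` assigns a probability distribution to every tie-free profile. -/
def MechU {n m : ℕ} (J : (Fin n → Fin m → ℝ) → Fin m → ℝ) : Prop :=
  ∀ u, IsProfileU u → IsDist (J u)

/-- Truthfulness (on tie-free profiles). -/
def Truthful {n m : ℕ} (J : (Fin n → Fin m → ℝ) → Fin m → ℝ) : Prop :=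
  ∀ u, IsProfileU u → ∀ (i : Fin n) (v : Fin m → ℝ), IsPrefU v →
    ∑ j, J (Function.update u i v) j * u i j ≤ ∑ j, J u j * u i j

/-- Ordinality (on tie-free profiles). -/
def OrdinalMech {n m : ℕ} (J : (Fin n → Fin m → ℝ) → Fin m → ℝ) : Prop :=
  ∀ u u' : Fin n → Fin m → ℝ, IsProfileU u → IsProfileU u' →
    (∀ i (j j' : Fin m), u i j < u i j' ↔ u' i j < u' i j') → J u = J u'

/-- Unilateral mechanism (on tie-free profiles): depends only on one voter. -/
def Unilateral {n m : ℕ} (J : (Fin n → Fin m → ℝ) → Fin m → ℝ) : Prop :=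
  ∃ i : Fin n, ∀ u u' : Fin n → Fin m → ℝ, IsProfileU u → IsProfileU u' →
    u i = u' i → J u = J u'

/-- Duple mechanism (on tie-free profiles): supported on two fixed candidates. -/
def Duple {n m : ℕ} (J : (Fin n → Fin m → ℝ) → Fin m → ℝ) : Prop :=
  ∃ j₀ j₁ : Fin m, j₀ ≠ j₁ ∧ ∀ u, IsProfileU u → ∀ j, j ≠ j₀ → j ≠ j₁ → J u j = 0

/-- Neutral mechanism (on tie-free profiles). -/
def Neutral {n m : ℕ} (J : (Fin n → Fin m → ℝ) → Fin m → ℝ) : Prop :=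
  ∀ τ : Equiv.Perm (Fin m), ∀ u : Fin n → Fin m → ℝ, IsProfileU u →
    ∀ j, J (fun i => u i ∘ τ) j = J u (τ j)

/-- Anonymous mechanism (on tie-free profiles). -/
def AnonymousMech {n m : ℕ} (J : (Fin n → Fin m → ℝ) → Fin m → ℝ) : Prop :=
  ∀ σ : Equiv.Perm (Fin n), ∀ u : Fin n → Fin m → ℝ, IsProfileU u →
    J (fun i => u (σ i)) = J u

/-- `ratio_U(J)`: infimum of the welfare ratio over tie-free profiles. -/
noncomputable def ratioU {n m : ℕ} (hm : 0 < m)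
    (J : (Fin n → Fin m → ℝ) → Fin m → ℝ) : ℝ :=
  sInf {r | ∃ u, IsProfileU u ∧ r = expWel J u / Wel (RV hm u) u}

/-- `R_k`: tie-free normalized preferences taking values in `{0,1/k,…,1}`. -/
def Rk {m : ℕ} (k : ℕ) (u : Fin m → ℝ) : Prop :=
  IsPrefU u ∧ ∀ j, ∃ t : ℕ, t ≤ k ∧ u j = (t : ℝ) / k

/-- `a(u)`: the number of `t ∈ {0,…,k-1}` such that exactly one of `t/k` and
`(t+1)/k` lies in the image of `u`. -/
noncomputable def aOf {m : ℕ} (k : ℕ) (u : Fin m → ℝ) : ℕ :=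
  ((Finset.range k).filter fun t : ℕ =>
    ((∃ j : Fin m, u j = (t : ℝ) / k) ∧ ¬ (∃ j : Fin m, u j = ((t : ℝ) + 1) / k)) ∨
    ((∃ j : Fin m, u j = ((t : ℝ) + 1) / k) ∧ ¬ (∃ j : Fin m, u j = (t : ℝ) / k))).card

/-- `C_k = {u ∈ R_k : a(u) = 2}`. -/
def Ck {m : ℕ} (k : ℕ) (u : Fin m → ℝ) : Prop :=
  Rk k u ∧ aOf k u = 2

/-- `count(u)`: the number of candidates with `u`-value above `1/2`. -/
noncomputable def countOf {m : ℕ} (u : Fin m → ℝ) : ℕ :=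
  (Finset.univ.filter fun j => (1 : ℝ)/2 < u j).card

/-- `rank(u,j) = #{j' : u(j') ≥ u(j)}`. -/
noncomputable def rankOf {m : ℕ} (u : Fin m → ℝ) (j : Fin m) : ℕ :=
  (Finset.univ.filter fun j' => u j ≤ u j').card

/-- `D_k = D_k^{(a)} ∪ D_k^{(b)} ∪ D_k^{(c)}` (`⟨0,hm⟩` is the first candidate). -/
def Dk {m : ℕ} (hm : 0 < m) (k : ℕ) (u : Fin m → ℝ) : Prop :=
  Ck k u ∧
    ((countOf u ≤ 2 ∧ (1 : ℝ)/2 < u ⟨0, hm⟩) ∨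
     (countOf u = 1 ∧ mroot3 m < rankOf u ⟨0, hm⟩) ∨
     (countOf u = mroot3 m + 1 ∧ rankOf u ⟨0, hm⟩ = mroot3 m + 1))

/-- `g(u) = E[Wel(J*(u),u)] / Wel(1,u)` where `1` is the first candidate. -/
noncomputable def gfun {n m : ℕ} (hm : 0 < m) (u : Fin n → Fin m → ℝ) : ℝ :=
  expWel Jstar u / Wel ⟨0, hm⟩ u

/-- The minimum (as an infimum) of `f` over profiles all of whose preference
functions satisfy `P`. -/
noncomputable def minOver {n m : ℕ} (P : (Fin m → ℝ) → Prop)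
    (f : (Fin n → Fin m → ℝ) → ℝ) : ℝ :=
  sInf {r | ∃ u : Fin n → Fin m → ℝ, (∀ i, P (u i)) ∧ r = f u}


/-- An abstract symmetric strategyproof ordinal mechanism; orders are given by injective
keys (smaller is better). -/
structure GoodMech {n m : ℕ} (Q : (Fin n → Fin m → ℕ) → Fin m → ℝ) : Prop where
  nonneg : ∀ κ, (∀ i, Function.Injective (κ i)) → ∀ j, 0 ≤ Q κ j
  sum_one : ∀ κ, (∀ i, Function.Injective (κ i)) → ∑ j, Q κ j = 1
  truth : ∀ κ, (∀ i, Function.Injective (κ i)) → ∀ i (ρ : Fin m → ℕ), Function.Injective ρ →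
    ∀ A : Finset (Fin m), (∀ a ∈ A, ∀ b, b ∉ A → κ i a < κ i b) →
      ∑ j ∈ A, Q (Function.update κ i ρ) j ≤ ∑ j ∈ A, Q κ j
  neutral : ∀ κ, (∀ i, Function.Injective (κ i)) → ∀ τ : Equiv.Perm (Fin m), ∀ j,
    Q (fun i => κ i ∘ τ) j = Q κ (τ j)
  anon : ∀ κ, (∀ i, Function.Injective (κ i)) → ∀ σ : Equiv.Perm (Fin n),
    Q (fun i => κ (σ i)) = Q κ

section core

variable {n m : ℕ} {Q : (Fin n → Fin m → ℕ) → Fin m → ℝ}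

lemma inj_update {κ : Fin n → Fin m → ℕ} (hκ : ∀ i, Function.Injective (κ i)) (i : Fin n)
    {ρ : Fin m → ℕ} (hρ : Function.Injective ρ) :
    ∀ i', Function.Injective (Function.update κ i ρ i') := by
  intro i'
  by_cases h : i' = i
  · subst h; simpa using hρ
  · simpa [h] using hκ i'

lemma upper_sum_eq (hQ : GoodMech Q) {κ : Fin n → Fin m → ℕ}
    (hκ : ∀ i, Function.Injective (κ i)) (i : Fin n)
    {ρ : Fin m → ℕ} (hρ : Function.Injective ρ) (A : Finset (Fin m))
    (h1 : ∀ a ∈ A, ∀ b, b ∉ A → κ i a < κ i b) (h2 : ∀ a ∈ A, ∀ b, b ∉ A → ρ a < ρ b) :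
    ∑ j ∈ A, Q (Function.update κ i ρ) j = ∑ j ∈ A, Q κ j := by
  apply le_antisymm (hQ.truth κ hκ i ρ hρ A h1)
  have := hQ.truth (Function.update κ i ρ) (inj_update hκ i hρ) i (κ i) (hκ i) A
    (by simpa using h2)
  simpa using this

lemma mech_inv_one (hQ : GoodMech Q) {κ : Fin n → Fin m → ℕ}
    (hκ : ∀ i, Function.Injective (κ i)) (i : Fin n)
    {ρ : Fin m → ℕ} (hρ : Function.Injective ρ) (z : Fin m)
    (h : ∀ j, κ i j < κ i z ↔ ρ j < ρ z) :
    Q (Function.update κ i ρ) z = Q κ z := by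
  classical
  set U : Finset (Fin m) := univ.filter fun j => κ i j < κ i z with hU
  have hz : z ∉ U := by simp [hU]
  have e1 := upper_sum_eq hQ hκ i hρ U
    (by intro a ha b hb
        simp only [hU, mem_filter, mem_univ, true_and, not_lt] at ha hb; omega)
    (by intro a ha b hb
        simp only [hU, mem_filter, mem_univ, true_and, h, not_lt] at ha hb; omega)
  have e2 := upper_sum_eq hQ hκ i hρ (insert z U)
    (by intro a ha b hb
        simp only [hU, mem_insert, mem_filter, mem_univ, true_and, not_lt, not_or] at ha hb
        have : κ i z ≠ κ i b := fun h => hb.1 ((hκ i h).symm)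
        rcases ha with rfl | ha <;> omega)
    (by intro a ha b hb
        simp only [hU, mem_insert, mem_filter, mem_univ, true_and, h, not_lt, not_or] at ha hb
        have : ρ z ≠ ρ b := fun h => hb.1 ((hρ h).symm)
        rcases ha with rfl | ha <;> omega)
  rw [sum_insert hz, sum_insert hz] at e2
  linarith

lemma mech_inv_all (hQ : GoodMech Q) {κ κ' : Fin n → Fin m → ℕ}
    (hκ : ∀ i, Function.Injective (κ i)) (hκ' : ∀ i, Function.Injective (κ' i)) (z : Fin m)
    (h : ∀ i j, κ i j < κ i z ↔ κ' i j < κ' i z) :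
    Q κ z = Q κ' z := by
  classical
  have key : ∀ S : Finset (Fin n), Q (fun i => if i ∈ S then κ' i else κ i) z = Q κ z := by
    intro S
    induction S using Finset.induction_on with
    | empty => simp
    | insert a S ha ih =>
      rw [← ih]
      have e : (fun i => if i ∈ insert a S then κ' i else κ i) =
          Function.update (fun i => if i ∈ S then κ' i else κ i) a (κ' a) := by
        funext i
        by_cases hi : i = a
        · subst hi; simp
        · simp [hi]
      rw [e]
      apply mech_inv_one hQ _ a (hκ' a)
      · intro j; simp [ha, h]
      · intro i; by_cases hi : i ∈ S <;> simp [hi, hκ, hκ']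
  have := key univ
  simpa using this.symm

/-- Order key with given levels, refined by the index. -/
def okey (l : Fin m → ℕ) (j : Fin m) : ℕ := l j * m + j

lemma okey_inj (l : Fin m → ℕ) : Function.Injective (okey l) := by
  intro a b h
  have := congrArg (· % m) h
  simp only [okey] at this
  rw [Nat.mul_add_mod_self_right, Nat.mul_add_mod_self_right, Nat.mod_eq_of_lt a.2, Nat.mod_eq_of_lt b.2] at this
  exact Fin.ext this

lemma okey_lt {l : Fin m → ℕ} {a b : Fin m} (h : l a < l b) : okey l a < okey l b := by
  have : (l a + 1) * m ≤ l b * m := Nat.mul_le_mul_right _ h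
  have := a.2
  simp only [okey]; nlinarith

lemma okey_lt_iff {l : Fin m → ℕ} {z : Fin m} (h : ∀ j, l j = l z → j = z) (j : Fin m) :
    okey l j < okey l z ↔ l j < l z := by
  constructor
  · intro hj
    by_contra hc
    rcases lt_or_eq_of_le (not_lt.1 hc) with h1 | h1
    · exact absurd (okey_lt h1) (by omega)
    · rw [h j h1.symm] at hj; exact lt_irrefl _ hj
  · exact okey_lt

/-- levels: `A`, then `z`, then the rest -/
def lev (A : Finset (Fin m)) (z j : Fin m) : ℕ := if j ∈ A then 0 else if j = z then 1 else 2

lemma lev_key {A : Finset (Fin m)} {z : Fin m} (hz : z ∉ A) (j : Fin m) :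
    okey (lev A z) j < okey (lev A z) z ↔ j ∈ A := by
  rw [okey_lt_iff]
  · simp only [lev]; grind
  · intro j; simp only [lev]; grind

/-- Probability of `z` as a function of the upper sets of `z`. -/
def Fz (Q : (Fin n → Fin m → ℕ) → Fin m → ℝ) (z : Fin m) (A : Fin n → Finset (Fin m)) : ℝ :=
  Q (fun i => okey (lev (A i) z)) z

lemma Fz_eq (hQ : GoodMech Q) {κ : Fin n → Fin m → ℕ}
    (hκ : ∀ i, Function.Injective (κ i)) (z : Fin m) (A : Fin n → Finset (Fin m))
    (h : ∀ i j, κ i j < κ i z ↔ j ∈ A i) : Q κ z = Fz Q z A := by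
  apply mech_inv_all hQ hκ (fun i => okey_inj _)
  intro i j
  rw [h, lev_key]
  rw [← h]; simp

lemma Fz_symm (hQ : GoodMech Q) (z : Fin m) (A A' : Fin n → Finset (Fin m))
    (τ : Equiv.Perm (Fin m)) (σ : Equiv.Perm (Fin n)) (hz : ∀ i, z ∉ A i)
    (h : ∀ i j, τ j ∈ A' (σ i) ↔ j ∈ A i) : Fz Q (τ z) A' = Fz Q z A := by
  have h1 := hQ.anon (fun i => okey (lev (A' i) (τ z))) (fun i => okey_inj _) σ
  unfold Fz
  rw [← h1]
  rw [← hQ.neutral _ (fun i => okey_inj _) τ z]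
  apply Fz_eq hQ
  · intro i; exact (okey_inj _).comp τ.injective
  · intro i j
    simp only [Function.comp]
    rw [lev_key, h]
    rw [h]; exact hz i

/-- the canonical upper sets for `x` -/
def canA (x : Fin m) (S : Finset (Fin n)) (j : Fin n) : Finset (Fin m) :=
  if j ∈ S then univ.erase x else ∅

lemma swap_eq (hQ : GoodMech Q) {x z : Fin m} (hxz : x ≠ z) (A : Fin n → Finset (Fin m))
    (hA : ∀ j, z ∉ A j) (i : Fin n) (B : Finset (Fin m)) (hx : x ∉ B) (hz : z ∉ B)
    (S : Finset (Fin n)) (hS : ∀ j, j ≠ i → (j ∈ S ↔ x ∉ A j)) :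
    Fz Q z (Function.update A i B) - Fz Q z (Function.update A i (insert x B)) =
    Fz Q x (Function.update (canA x S) i B) - Fz Q x (Function.update (canA x S) i (insert z B))
    ∧ 0 ≤ Fz Q z (Function.update A i B) - Fz Q z (Function.update A i (insert x B)) := by
  classical
  let l1 : Fin m → ℕ := fun j => if j ∈ B then 0 else if j = x then 1 else if j = z then 2 else 3
  let l2 : Fin m → ℕ := fun j => if j ∈ B then 0 else if j = z then 1 else if j = x then 2 else 3
  let lo : Fin n → Fin m → ℕ := fun t j =>
    if x ∈ A t then (if j = x then 0 else if j ∈ A t then 1 else if j = z then 2 else 3)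
    else (if j ∈ A t then 0 else if j = z then 1 else if j = x then 3 else 2)
  let κ : Fin n → Fin m → ℕ := Function.update (fun t => okey (lo t)) i (okey l1)
  have hκ : ∀ t, Function.Injective (κ t) := inj_update (fun t => okey_inj _) i (okey_inj _)
  let κ' : Fin n → Fin m → ℕ := Function.update κ i (okey l2)
  have hκ' : ∀ t, Function.Injective (κ' t) := inj_update hκ i (okey_inj _)
  have e : κ' = Function.update (fun t => okey (lo t)) i (okey l2) := by simp [κ', κ]
  have loz : ∀ t j, okey (lo t) j < okey (lo t) z ↔ j ∈ A t := by
    intro t j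
    have := hA t
    rw [okey_lt_iff]
    · simp only [lo]; grind
    · intro j; simp only [lo]; grind
  have lox : ∀ t, t ≠ i → ∀ j, okey (lo t) j < okey (lo t) x ↔ j ∈ canA x S t := by
    intro t ht j
    have := hA t
    have := hS t ht
    rw [okey_lt_iff]
    · simp only [lo, canA]; grind
    · intro j; simp only [lo]; grind
  have l1z : ∀ j, okey l1 j < okey l1 z ↔ j ∈ insert x B := by
    intro j
    rw [okey_lt_iff]
    · simp only [l1]; grind
    · intro j; simp only [l1]; grind
  have l1x : ∀ j, okey l1 j < okey l1 x ↔ j ∈ B := by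
    intro j
    rw [okey_lt_iff]
    · simp only [l1]; grind
    · intro j; simp only [l1]; grind
  have l2z : ∀ j, okey l2 j < okey l2 z ↔ j ∈ B := by
    intro j
    rw [okey_lt_iff]
    · simp only [l2]; grind
    · intro j; simp only [l2]; grind
  have l2x : ∀ j, okey l2 j < okey l2 x ↔ j ∈ insert z B := by
    intro j
    rw [okey_lt_iff]
    · simp only [l2]; grind
    · intro j; simp only [l2]; grind
  have q1z : Q κ z = Fz Q z (Function.update A i (insert x B)) := by
    apply Fz_eq hQ hκ
    intro t j
    by_cases ht : t = i
    · subst ht; simpa [κ] using l1z j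
    · simpa [κ, ht] using loz t j
  have q1x : Q κ x = Fz Q x (Function.update (canA x S) i B) := by
    apply Fz_eq hQ hκ
    intro t j
    by_cases ht : t = i
    · subst ht; simpa [κ] using l1x j
    · simpa [κ, ht] using lox t ht j
  have q2z : Q κ' z = Fz Q z (Function.update A i B) := by
    apply Fz_eq hQ hκ'
    intro t j
    by_cases ht : t = i
    · subst ht; simpa [κ'] using l2z j
    · simpa [κ', κ, ht] using loz t j
  have q2x : Q κ' x = Fz Q x (Function.update (canA x S) i (insert z B)) := by
    apply Fz_eq hQ hκ'
    intro t j
    by_cases ht : t = i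
    · subst ht; simpa [κ'] using l2x j
    · simpa [κ', κ, ht] using lox t ht j
  have s0 := upper_sum_eq hQ hκ i (okey_inj l2) B
    (by intro a ha b hb; simp only [κ, Function.update_self]; apply okey_lt; simp only [l1]; grind)
    (by intro a ha b hb; apply okey_lt; simp only [l2]; grind)
  have s2 := upper_sum_eq hQ hκ i (okey_inj l2) (insert x (insert z B))
    (by intro a ha b hb; simp only [κ, Function.update_self]; apply okey_lt; simp only [l1]; grind)
    (by intro a ha b hb; apply okey_lt; simp only [l2]; grind)
  have s1 := hQ.truth κ hκ i (okey l2) (okey_inj l2) (insert x B)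
    (by intro a ha b hb; simp only [κ, Function.update_self]; apply okey_lt; simp only [l1]; grind)
  have hx' : x ∉ insert z B := by simp [hxz, hx]
  rw [sum_insert hx', sum_insert hz, sum_insert hx', sum_insert hz] at s2
  rw [sum_insert hx, sum_insert hx] at s1
  change Q κ' x + (Q κ' z + _) = _ at s2
  change Q κ' x + _ ≤ _ at s1
  rw [← q1z, ← q1x, ← q2z, ← q2x]
  constructor <;> linarith

end core

lemma perm_of_fibers {α : Type*} [Fintype α] (f f' : α → ℕ)
    (h : ∀ c, (univ.filter fun a => f a = c).card = (univ.filter fun a => f' a = c).card) :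
    ∃ τ : Equiv.Perm α, ∀ a, f' (τ a) = f a := by
  classical
  have e : ∀ c, Nonempty ({a // f a = c} ≃ {a // f' a = c}) := by
    intro c
    refine ⟨Fintype.equivOfCardEq ?_⟩
    rw [Fintype.card_subtype, Fintype.card_subtype]; exact h c
  replace e := fun c => (e c).some
  refine ⟨((Equiv.sigmaFiberEquiv f).symm.trans (Equiv.sigmaCongrRight e)).trans
    (Equiv.sigmaFiberEquiv f'), ?_⟩
  intro a
  simp only [Equiv.trans_apply, Equiv.sigmaFiberEquiv, Equiv.coe_fn_symm_mk, Equiv.coe_fn_mk,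
    Equiv.sigmaCongrRight_apply, Sigma.map]
  exact (e (f a) ⟨a, rfl⟩).2

lemma perm_cand {α : Type*} [Fintype α] [DecidableEq α] {x z x' z' : α} {B B' : Finset α}
    (h : x ≠ z) (h' : x' ≠ z')
    (hx : x ∉ B) (hz : z ∉ B) (hx' : x' ∉ B') (hz' : z' ∉ B') (hc : B.card = B'.card) :
    ∃ τ : Equiv.Perm α, τ x = x' ∧ τ z = z' ∧ ∀ j, τ j ∈ B' ↔ j ∈ B := by
  have main : ∀ (x z : α) (B : Finset α), x ≠ z → x ∉ B → z ∉ B → ∀ c,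
      (univ.filter fun a => (if a = x then 0 else if a = z then 1 else if a ∈ B then 2 else 3)
        = c).card = if c = 0 then 1 else if c = 1 then 1 else if c = 2 then B.card else
          if c = 3 then Fintype.card α - (B.card + 2) else 0 := by
    intro x z B h hx hz c
    rcases Nat.lt_or_ge c 4 with hc | hc
    · interval_cases c
      · rw [show (univ.filter fun a => (if a = x then 0 else if a = z then 1 else
          if a ∈ B then 2 else 3) = 0) = {x} by ext a; grind]
        simp
      · rw [show (univ.filter fun a => (if a = x then 0 else if a = z then 1 else
          if a ∈ B then 2 else 3) = 1) = {z} by ext a; grind]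
        simp
      · rw [show (univ.filter fun a => (if a = x then 0 else if a = z then 1 else
          if a ∈ B then 2 else 3) = 2) = B by ext a; grind]
        simp
      · rw [show (univ.filter fun a => (if a = x then 0 else if a = z then 1 else
          if a ∈ B then 2 else 3) = 3) = (insert x (insert z B))ᶜ by
            ext a; simp only [mem_filter, mem_univ, true_and, mem_compl, mem_insert]; grind]
        rw [card_compl, card_insert_of_notMem (by simp [h, hx]), card_insert_of_notMem hz]
        simp
    · rw [show (univ.filter fun a => (if a = x then 0 else if a = z then 1 else
          if a ∈ B then 2 else 3) = c) = ∅ by ext a; grind]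
      grind
  obtain ⟨τ, hτ⟩ := perm_of_fibers
    (fun a => if a = x then 0 else if a = z then 1 else if a ∈ B then 2 else 3)
    (fun a => if a = x' then 0 else if a = z' then 1 else if a ∈ B' then 2 else 3)
    (by intro c; rw [main x z B h hx hz, main x' z' B' h' hx' hz', hc])
  refine ⟨τ, ?_, ?_, ?_⟩
  · have := hτ x; grind
  · have := hτ z; grind
  · intro j; have := hτ j; grind

lemma perm_vote {α : Type*} [Fintype α] [DecidableEq α] {i i' : α} {S S' : Finset α}
    (hi : i ∉ S) (hi' : i' ∉ S') (hc : S.card = S'.card) :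
    ∃ σ : Equiv.Perm α, σ i = i' ∧ ∀ j, σ j ∈ S' ↔ j ∈ S := by
  have main : ∀ (i : α) (S : Finset α), i ∉ S → ∀ c,
      (univ.filter fun a => (if a = i then 0 else if a ∈ S then 1 else 2)
        = c).card = if c = 0 then 1 else if c = 1 then S.card else
          if c = 2 then Fintype.card α - (S.card + 1) else 0 := by
    intro i S hi c
    rcases Nat.lt_or_ge c 3 with hc | hc
    · interval_cases c
      · rw [show (univ.filter fun a => (if a = i then 0 else if a ∈ S then 1 else 2) = 0)
          = {i} by ext a; grind]
        simp
      · rw [show (univ.filter fun a => (if a = i then 0 else if a ∈ S then 1 else 2) = 1)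
          = S by ext a; grind]
        simp
      · rw [show (univ.filter fun a => (if a = i then 0 else if a ∈ S then 1 else 2) = 2)
          = (insert i S)ᶜ by
            ext a; simp only [mem_filter, mem_univ, true_and, mem_compl, mem_insert]; grind]
        rw [card_compl, card_insert_of_notMem hi]
        simp
    · rw [show (univ.filter fun a => (if a = i then 0 else if a ∈ S then 1 else 2) = c)
          = ∅ by ext a; grind]
      grind
  obtain ⟨τ, hτ⟩ := perm_of_fibers
    (fun a => if a = i then 0 else if a ∈ S then 1 else 2)
    (fun a => if a = i' then 0 else if a ∈ S' then 1 else 2)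
    (by intro c; rw [main i S hi, main i' S' hi', hc])
  refine ⟨τ, ?_, ?_⟩
  · have := hτ i; grind
  · intro j; have := hτ j; grind

section core2

lemma cnt_aux {n m : ℕ} {i i' : Fin n} (hii : i ≠ i') {S : Finset (Fin n)} (hi : i ∉ S)
    (hi' : i' ∉ S) {x : Fin m} (C C' : Finset (Fin m)) :
    (x ∈ C' → (univ.filter fun j => j ≠ i ∧
      x ∉ (if j = i then C else if j = i' then C' else if j ∈ S then ∅ else {x})) = S) ∧
    (x ∉ C' → (univ.filter fun j => j ≠ i ∧
      x ∉ (if j = i then C else if j = i' then C' else if j ∈ S then ∅ else {x})) = insert i' S) ∧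
    (x ∈ C → (univ.filter fun j => j ≠ i' ∧
      x ∉ (if j = i then C else if j = i' then C' else if j ∈ S then ∅ else {x})) = S) ∧
    (x ∉ C → (univ.filter fun j => j ≠ i' ∧
      x ∉ (if j = i then C else if j = i' then C' else if j ∈ S then ∅ else {x}))
        = insert i S) := by
  refine ⟨?_, ?_, ?_, ?_⟩ <;>
  · intro h; ext j
    simp only [mem_filter, mem_univ, true_and, mem_insert]
    by_cases h1 : j = i
    · subst h1; simp_all
    · by_cases h2 : j = i'
      · subst h2; simp_all
      · by_cases h3 : j ∈ S <;> simp_all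

variable {n m : ℕ} {Q : (Fin n → Fin m → ℕ) → Fin m → ℝ}

/-- The canonical gain. -/
def gain (Q : (Fin n → Fin m → ℕ) → Fin m → ℝ) (x z : Fin m) (i : Fin n)
    (B : Finset (Fin m)) (S : Finset (Fin n)) : ℝ :=
  Fz Q x (Function.update (canA x S) i B) - Fz Q x (Function.update (canA x S) i (insert z B))

lemma gain_eq (hQ : GoodMech Q) {x z x' z' : Fin m} {B B' : Finset (Fin m)}
    {i i' : Fin n} {S S' : Finset (Fin n)}
    (h : x ≠ z) (h' : x' ≠ z')
    (hx : x ∉ B) (hz : z ∉ B) (hx' : x' ∉ B') (hz' : z' ∉ B') (hc : B.card = B'.card)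
    (hi : i ∉ S) (hi' : i' ∉ S') (hc' : S.card = S'.card) :
    gain Q x z i B S = gain Q x' z' i' B' S' := by
  obtain ⟨τ, t1, t2, t3⟩ := perm_cand h h' hx hz hx' hz' hc
  obtain ⟨σ, s1, s2⟩ := perm_vote hi hi' hc'
  unfold gain
  subst t1 t2 s1
  have hcan : ∀ t j, τ j ∈ canA (τ x) S' (σ t) ↔ j ∈ canA x S t := by
    intro t j
    have := s2 t
    simp only [canA]
    by_cases ht : t ∈ S
    · rw [if_pos (this.2 ht), if_pos ht]; simp
    · rw [if_neg (fun h => ht (this.1 h)), if_neg ht]; simp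
  have hcx : ∀ t, x ∉ canA x S t := by
    intro t; simp only [canA]; split_ifs <;> simp
  rw [Fz_symm hQ x (Function.update (canA x S) i B) _ τ σ,
    Fz_symm hQ x (Function.update (canA x S) i (insert z B)) _ τ σ]
  · intro t
    by_cases ht : t = i
    · subst ht; simp [h, hx]
    · simpa [ht] using hcx t
  · intro t j
    by_cases ht : t = i
    · subst ht; simp [t3]
    · simpa [ht] using hcan t j
  · intro t
    by_cases ht : t = i
    · subst ht; simp [hx]
    · simpa [ht] using hcx t
  · intro t j
    by_cases ht : t = i
    · subst ht; simp [t3]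
    · simpa [ht] using hcan t j

/-- Gains depend only on position and the number of supporters. -/
lemma exists_d (hQ : GoodMech Q) : ∃ d : ℕ → ℕ → ℝ,
    ∀ (x z : Fin m), x ≠ z → ∀ (A : Fin n → Finset (Fin m)), (∀ j, z ∉ A j) →
      ∀ i, x ∉ A i →
      Fz Q z A - Fz Q z (Function.update A i (insert x (A i))) =
        d (A i).card (univ.filter fun j => j ≠ i ∧ x ∉ A j).card ∧
      0 ≤ d (A i).card (univ.filter fun j => j ≠ i ∧ x ∉ A j).card := by
  classical
  let P : ℕ → ℕ → ℝ → Prop := fun b s r => ∃ (x z : Fin m) (i : Fin n) (B : Finset (Fin m))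
    (S : Finset (Fin n)), x ≠ z ∧ x ∉ B ∧ z ∉ B ∧ i ∉ S ∧ B.card = b ∧ S.card = s ∧
      r = gain Q x z i B S
  refine ⟨fun b s => if h : ∃ r, P b s r then h.choose else 0, ?_⟩
  intro x z hxz A hA i hx
  set S := (univ.filter fun j => j ≠ i ∧ x ∉ A j) with hS
  have hiS : i ∉ S := by simp [hS]
  have hex : ∃ r, P (A i).card S.card r :=
    ⟨_, x, z, i, A i, S, hxz, hx, hA i, hiS, rfl, rfl, rfl⟩
  have hsw := swap_eq hQ hxz A hA i (A i) hx (hA i) S (by intro j hj; simp [hS, hj])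
  rw [Function.update_eq_self] at hsw
  have hd : (if h : ∃ r, P (A i).card S.card r then h.choose else 0) = gain Q x z i (A i) S := by
    rw [dif_pos hex]
    obtain ⟨x', z', i', B', S', h', hx', hz', hi', hc, hc', hr⟩ := hex.choose_spec
    rw [hr]
    exact gain_eq hQ h' hxz hx' hz' hx (hA i) hc hi' hiS hc'
  simp only [hd]
  exact ⟨hsw.1, hsw.2.trans_eq hsw.1⟩

lemma exists_sep (hm : 2 ≤ m) (hn : 1 ≤ n) (hQ : GoodMech Q) : ∃ α β : ℕ → ℝ,
    (∀ b, b < m - 1 → 0 ≤ α b) ∧ (∀ s, s < n → 0 ≤ β s) ∧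
    ∀ (x z : Fin m), x ≠ z → ∀ (A : Fin n → Finset (Fin m)), (∀ j, z ∉ A j) →
      ∀ i, x ∉ A i →
      Fz Q z A - Fz Q z (Function.update A i (insert x (A i))) =
        α (A i).card + β (univ.filter fun j => j ≠ i ∧ x ∉ A j).card := by
  classical
  obtain ⟨d, hd⟩ := exists_d hQ
  -- existence of sets
  let z : Fin m := ⟨0, by omega⟩
  let x : Fin m := ⟨1, by omega⟩
  have hxz : x ≠ z := by simp [x, z]
  have hB : ∀ b, b < m - 1 → ∃ B : Finset (Fin m), x ∉ B ∧ z ∉ B ∧ B.card = b := by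
    intro b hb
    have : b ≤ ((univ.erase x).erase z).card := by
      rw [card_erase_of_mem (by simp [hxz.symm]), card_erase_of_mem (by simp)]
      simp; omega
    obtain ⟨B, h1, h2⟩ := exists_subset_card_eq this
    refine ⟨B, ?_, ?_, h2⟩
    · intro h; have := h1 h; simp at this
    · intro h; have := h1 h; simp at this
  have hpos : ∀ b s, b < m - 1 → s < n → 0 ≤ d b s := by
    intro b s hb hs
    obtain ⟨B, b1, b2, b3⟩ := hB b hb
    let i : Fin n := ⟨0, hn⟩
    have : s ≤ (univ.erase i).card := by
      rw [card_erase_of_mem (by simp)]; simp; omega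
    obtain ⟨S, s1, s2⟩ := exists_subset_card_eq this
    have hi : i ∉ S := by intro h; have := s1 h; simp at this
    have := (hd x z hxz (fun j => if j = i then B else if j ∈ S then ∅ else {x})
      (by intro j; split_ifs <;> simp [b2, hxz.symm]) i (by simp [b1])).2
    have e : (univ.filter fun j => j ≠ i ∧ x ∉ (if j = i then B else if j ∈ S then ∅ else {x}))
        = S := by ext j; by_cases h : j = i <;> by_cases h' : j ∈ S <;> simp_all
    rw [e] at this
    simpa [b3, s2] using this
  have hsep : ∀ b b' s, b < m - 1 → b' < m - 1 → s + 1 < n →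
      d b s + d b' (s+1) = d b' s + d b (s+1) := by
    intro b b' s hb hb' hs
    obtain ⟨B, b1, b2, b3⟩ := hB b hb
    obtain ⟨B', b1', b2', b3'⟩ := hB b' hb'
    let i : Fin n := ⟨0, hn⟩
    let i' : Fin n := ⟨1, by omega⟩
    have hii : i ≠ i' := by simp [i, i']
    have : s ≤ ((univ.erase i).erase i').card := by
      rw [card_erase_of_mem (by simp [hii.symm]), card_erase_of_mem (by simp)]; simp; omega
    obtain ⟨S, s1, s2⟩ := exists_subset_card_eq this
    have hi : i ∉ S := by intro h; have := s1 h; simp at this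
    have hi' : i' ∉ S := by intro h; have := s1 h; simp at this
    let A : Finset (Fin m) → Finset (Fin m) → Fin n → Finset (Fin m) := fun C C' j =>
      if j = i then C else if j = i' then C' else if j ∈ S then ∅ else {x}
    have hzA : ∀ C C', z ∉ C → z ∉ C' → ∀ j, z ∉ A C C' j := by
      intro C C' h h' j; simp only [A]; split_ifs <;> simp [h, h', hxz.symm]
    have u1 : ∀ C C', Function.update (A C C') i (insert x (A C C' i)) = A (insert x C) C' := by
      intro C C'; funext j; by_cases h : j = i
      · subst h; simp [A]
      · simp [A, h]
    have u2 : ∀ C C', Function.update (A C C') i' (insert x (A C C' i')) = A C (insert x C') := by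
      intro C C'; funext j; by_cases h : j = i'
      · subst h; simp [A, hii.symm]
      · simp [A, h]
    have ai : ∀ C C', A C C' i = C := by intro C C'; simp [A]
    have ai' : ∀ C C', A C C' i' = C' := by intro C C'; simp [A, hii.symm]
    have c1 : ∀ C, (univ.filter fun j => j ≠ i ∧ x ∉ A C (insert x B') j) = S := by
      intro C; exact (cnt_aux hii hi hi' C (insert x B')).1 (mem_insert_self _ _)
    have c2 : ∀ C, (univ.filter fun j => j ≠ i' ∧ x ∉ A (insert x B) C j) = S := by
      intro C; exact (cnt_aux hii hi hi' (insert x B) C).2.2.1 (mem_insert_self _ _)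
    have c3 : ∀ C, (univ.filter fun j => j ≠ i ∧ x ∉ A C B' j) = insert i' S := by
      intro C; exact (cnt_aux hii hi hi' C B').2.1 b1'
    have c4 : ∀ C, (univ.filter fun j => j ≠ i' ∧ x ∉ A B C j) = insert i S := by
      intro C; exact (cnt_aux hii hi hi' B C).2.2.2 b1
    have z1 : z ∉ insert x B := by simp [hxz.symm, b2]
    have z2 : z ∉ insert x B' := by simp [hxz.symm, b2']
    have e1 := (hd x z hxz (A B (insert x B')) (hzA _ _ b2 z2) i (by rw [ai]; exact b1)).1
    have e2 := (hd x z hxz (A (insert x B) B') (hzA _ _ z1 b2') i' (by rw [ai']; exact b1')).1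
    have e3 := (hd x z hxz (A B B') (hzA _ _ b2 b2') i (by rw [ai]; exact b1)).1
    have e4 := (hd x z hxz (A B B') (hzA _ _ b2 b2') i' (by rw [ai']; exact b1')).1
    rw [u1, ai, c1, b3, s2] at e1
    rw [u2, ai', c2, b3', s2] at e2
    rw [u1, ai, c3, b3, card_insert_of_notMem hi', s2] at e3
    rw [u2, ai', c4, b3', card_insert_of_notMem hi, s2] at e4
    linarith
  obtain ⟨b0, hb0, hmin⟩ := exists_min_image (range (m-1)) (fun b => d b 0) ⟨0, by simp; omega⟩
  simp only [mem_range] at hb0 hmin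
  have hfin : ∀ b s, b < m - 1 → s < n → d b s = (d b 0 - d b0 0) + d b0 s := by
    intro b s hb
    induction s with
    | zero => intro _; ring
    | succ s ih =>
      intro hs
      have := ih (by omega)
      have := hsep b b0 s hb hb0 hs
      linarith
  refine ⟨fun b => d b 0 - d b0 0, fun s => d b0 s, ?_, ?_, ?_⟩
  · intro b hb; have := hmin b hb; simp only; linarith
  · intro s hs; exact hpos b0 s hb0 hs
  · intro x z hxz A hA i hx
    rw [(hd x z hxz A hA i hx).1]
    apply hfin
    · have : (A i).card ≤ ((univ.erase x).erase z).card := by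
        apply card_le_card
        intro j hj
        simp only [mem_erase, mem_univ, and_true]
        exact ⟨fun h => hA i (h ▸ hj), fun h => hx (h ▸ hj)⟩
      rw [card_erase_of_mem (by simp [hxz.symm]), card_erase_of_mem (by simp)] at this
      simp at this; omega
    · have : (univ.filter fun j => j ≠ i ∧ x ∉ A j).card ≤ (univ.erase i).card := by
        apply card_le_card
        intro j; simp; tauto
      have h2 : (univ.erase i).card = n - 1 := by simp
      rw [h2] at this
      omega

/-- The closed formula. -/
lemma Fz_formula {α β : ℕ → ℝ}
    (h : ∀ (x z : Fin m), x ≠ z → ∀ (A : Fin n → Finset (Fin m)), (∀ j, z ∉ A j) →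
      ∀ i, x ∉ A i →
      Fz Q z A - Fz Q z (Function.update A i (insert x (A i))) =
        α (A i).card + β (univ.filter fun j => j ≠ i ∧ x ∉ A j).card)
    (z : Fin m) : ∀ (N : ℕ) (A : Fin n → Finset (Fin m)), (∀ j, z ∉ A j) →
      ∑ i, (m - 1 - (A i).card) = N →
      Fz Q z A = Fz Q z (fun _ => univ.erase z) + ∑ i, ∑ b ∈ Ico (A i).card (m-1), α b +
        ∑ x ∈ univ.erase z, ∑ s ∈ range (univ.filter fun j => x ∉ A j).card, β s := by
  classical
  have hcard : (univ.erase z).card = m - 1 := by rw [card_erase_of_mem (by simp)]; simp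
  intro N
  induction N with
  | zero =>
    intro A hA hN
    have hAe : A = fun _ => univ.erase z := by
      funext i
      have hi := (sum_eq_zero_iff.1 hN) i (mem_univ _)
      apply eq_of_subset_of_card_le
      · intro j hj; simp; rintro rfl; exact hA i hj
      · rw [hcard]; omega
    subst hAe
    have e1 : ∀ x ∈ univ.erase z,
        ∑ s ∈ range (univ.filter fun j : Fin n => x ∉ univ.erase z).card, β s = 0 := by
      intro x hx
      simp at hx; simp [hx]
    rw [sum_congr rfl e1]; simp only [hcard]; simp
  | succ N ih =>
    intro A hA hN
    have hsub : ∀ i, A i ⊆ univ.erase z := by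
      intro i j hj; simp; rintro rfl; exact hA i hj
    have : ∃ i, 0 < m - 1 - (A i).card := by
      by_contra hc
      push Not at hc
      have : ∑ i, (m - 1 - (A i).card) = 0 := sum_eq_zero (fun i _ => Nat.le_zero.1 (hc i))
      omega
    obtain ⟨i, hi⟩ := this
    obtain ⟨x, hx1, hx2⟩ := exists_of_ssubset (ssubset_of_subset_of_ne (hsub i)
      (by intro h; rw [h, hcard] at hi; omega))
    have hxz : x ≠ z := by simpa using hx1
    have hstep := h x z hxz A hA i hx2
    set A' := Function.update A i (insert x (A i)) with hA'
    have hA'i : A' i = insert x (A i) := by simp [hA']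
    have hA'j : ∀ j, j ≠ i → A' j = A j := by intro j hj; simp [hA', hj]
    have hci : (A' i).card = (A i).card + 1 := by rw [hA'i, card_insert_of_notMem hx2]
    have hz' : ∀ j, z ∉ A' j := by
      intro j; by_cases hj : j = i
      · subst hj; rw [hA'i]; simp [hxz.symm, hA]
      · rw [hA'j j hj]; exact hA j
    have hN' : ∑ j, (m - 1 - (A' j).card) = N := by
      rw [← add_sum_erase _ _ (mem_univ i)] at hN ⊢
      rw [sum_congr rfl (fun j hj => by rw [hA'j j (ne_of_mem_erase hj)]), hci]
      omega
    have hI := ih A' hz' hN'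
    have s1 : ∑ j, ∑ b ∈ Ico (A j).card (m-1), α b =
        ∑ j, ∑ b ∈ Ico (A' j).card (m-1), α b + α (A i).card := by
      rw [← add_sum_erase _ _ (mem_univ i), ← add_sum_erase (a := i) _ (fun j => ∑ b ∈ Ico (A' j).card (m-1), α b) (mem_univ i)]
      have e0 : ∀ j ∈ univ.erase i, ∑ b ∈ Ico (A j).card (m-1), α b =
          ∑ b ∈ Ico (A' j).card (m-1), α b := by
        intro j hj; rw [← hA'j j (ne_of_mem_erase hj)]
      rw [sum_congr rfl e0, hci, sum_eq_sum_Ico_succ_bot (by omega)]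
      ring
    have s2 : ∑ x ∈ univ.erase z, ∑ s ∈ range (univ.filter fun j => x ∉ A j).card, β s =
        ∑ x ∈ univ.erase z, ∑ s ∈ range (univ.filter fun j => x ∉ A' j).card, β s +
        β (univ.filter fun j => j ≠ i ∧ x ∉ A j).card := by
      rw [← add_sum_erase _ _ hx1, ← add_sum_erase (a := x) _ (fun x => ∑ s ∈ range (univ.filter fun j => x ∉ A' j).card, β s) hx1]
      have e0 : ∀ y ∈ (univ.erase z).erase x, ∑ s ∈ range (univ.filter fun j => y ∉ A j).card, β s
          = ∑ s ∈ range (univ.filter fun j => y ∉ A' j).card, β s := by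
        intro y hy
        have hyx : y ≠ x := ne_of_mem_erase hy
        rw [show (univ.filter fun j => y ∉ A j) = (univ.filter fun j => y ∉ A' j) by
          ext j; by_cases hj : j = i
          · subst hj; simp [hA'i, hyx]
          · simp [hA'j j hj]]
      rw [sum_congr rfl e0]
      have e1 : (univ.filter fun j => x ∉ A' j) = (univ.filter fun j => j ≠ i ∧ x ∉ A j) := by
        ext j; by_cases hj : j = i
        · subst hj; simp [hA'i]
        · simp [hA'j j hj, hj]
      have e2 : (univ.filter fun j => x ∉ A j) =
          insert i (univ.filter fun j => j ≠ i ∧ x ∉ A j) := by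
        ext j; by_cases hj : j = i
        · subst hj; simp [hx2]
        · simp [hj]
      rw [e1, e2, card_insert_of_notMem (by simp), sum_range_succ]
      ring
    rw [s1, s2]
    linarith

/-- The key bound for a symmetric mechanism. -/
lemma key_bound (hm : 2 ≤ m) (hn : 1 ≤ n) (hQ : GoodMech Q) (z : Fin m)
    (A : Fin n → Finset (Fin m)) (hA : ∀ j, z ∉ A j) (T : Finset (Fin n)) (k : ℕ) (hk : k + 1 ≤ m)
    (hT : ∀ i ∈ T, (A i).card = k) (hT' : ∀ i, i ∉ T → (A i).card = m - 1) :
    Fz Q z A ≤ T.card / (n * (k + 1)) + 2 / m := by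
  classical
  obtain ⟨α, β, hα, hβ, h⟩ := exists_sep hm hn hQ
  have form := fun z A hA => Fz_formula h z _ A hA rfl
  set p0 := Fz Q z (fun _ => univ.erase z) with hp0
  have hp0' : ∀ y, Fz Q y (fun _ => univ.erase y) = p0 := by
    intro y
    have := Fz_symm hQ z (fun _ => univ.erase z) (fun _ => univ.erase y) (Equiv.swap z y) 1
      (by simp) (by
        intro i j
        simp only [mem_erase, mem_univ, and_true, ne_eq]
        rw [not_iff_not, Equiv.swap_apply_eq_iff, Equiv.swap_apply_right])
    rwa [Equiv.swap_apply_left] at this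
  have hp0n : 0 ≤ p0 := hQ.nonneg _ (fun i => okey_inj _) _
  set a : ℕ → ℝ := fun p => ∑ b ∈ Ico p (m-1), α b with ha
  set Bt : ℝ := ∑ s ∈ range n, β s with hBt
  have hBt0 : 0 ≤ Bt := sum_nonneg (fun s hs => hβ s (mem_range.1 hs))
  have ha0 : ∀ p, 0 ≤ a p := fun p => sum_nonneg (fun b hb => hα b (mem_Ico.1 hb).2)
  have hanti : ∀ p q, p ≤ q → a q ≤ a p := by
    intro p q hpq
    apply sum_le_sum_of_subset_of_nonneg
    · intro b; simp; omega
    · intro b hb _; exact hα b (mem_Ico.1 hb).2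
  -- identical profile
  have hid : ∀ p : Fin m, Q (fun _ j => (j : ℕ)) p = p0 + n * a p + ((m:ℝ) - 1 - p) * Bt := by
    intro p
    rw [Fz_eq hQ (fun i => Fin.val_injective) p (fun _ => Iio p) (by intro i j; simp)]
    rw [form p _ (by simp), hp0']
    congr 1
    · simp [ha]
    · have : ∀ x ∈ univ.erase p, ∑ s ∈ range (univ.filter fun j : Fin n => x ∉ Iio p).card, β s
          = if p < x then Bt else 0 := by
        intro x hx
        have hx : x ≠ p := by simpa using hx
        by_cases hxp : p < x
        · have : ¬ x < p := by order
          simp [hxp, this, hBt]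
        · have : x < p := by order
          simp [hxp, this]
      rw [sum_congr rfl this, ← sum_filter, sum_const, nsmul_eq_mul]
      congr 1
      rw [show (univ.erase p).filter (fun x => p < x) = Ioi p by ext x; simp; grind]
      rw [Fin.card_Ioi]
      have := p.2
      rw [Nat.cast_sub (by omega), Nat.cast_sub (by omega)]; simp
  have hsum := hQ.sum_one (fun _ j => (j : ℕ)) (fun i => Fin.val_injective)
  have hnn := fun j => hQ.nonneg (fun _ j => (j : ℕ)) (fun i => Fin.val_injective) j
  have hmR : (2:ℝ) ≤ m := by exact_mod_cast hm
  have hnR : (1:ℝ) ≤ n := by exact_mod_cast hn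
  -- bound 1
  have b1 : (k + 1) * (n * a k) ≤ 1 := by
    refine le_of_le_of_eq ?_ hsum
    calc ((k:ℝ) + 1) * (n * a k) = ∑ p ∈ univ.filter (fun p : Fin m => (p:ℕ) < k + 1), (n * a k) := by
          rw [sum_const, nsmul_eq_mul, Fin.card_filter_val_lt]
          rw [min_eq_right hk]; push_cast; ring
      _ ≤ ∑ p ∈ univ.filter (fun p : Fin m => (p:ℕ) < k + 1), Q (fun _ j => (j : ℕ)) p := by
          apply sum_le_sum
          intro p hp
          have hp : (p:ℕ) < k + 1 := by simpa using hp
          rw [hid]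
          have h1 : (n:ℝ) * a k ≤ n * a p := by
            apply mul_le_mul_of_nonneg_left (hanti _ _ (by omega)); positivity
          have h2 : (0:ℝ) ≤ (m:ℝ) - 1 - p := by
            have := p.2
            have : ((p:ℕ):ℝ) + 1 ≤ m := by exact_mod_cast this
            linarith
          nlinarith
      _ ≤ _ := sum_le_sum_of_subset_of_nonneg (subset_univ _) (fun j _ _ => hnn j)
  -- bound 2
  have b2 : m * p0 + m * (m - 1) / 2 * Bt ≤ 1 := by
    refine le_of_le_of_eq ?_ hsum
    have e : ∑ p : Fin m, (p0 + ((m:ℝ) - 1 - p) * Bt) = m * p0 + m * (m - 1) / 2 * Bt := by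
      rw [sum_add_distrib, ← sum_mul]
      simp only [sum_const, card_univ, Fintype.card_fin, nsmul_eq_mul]
      congr 2
      rw [sum_sub_distrib, Fin.sum_univ_eq_sum_range (fun p => (p:ℝ)) m]
      have : (∑ i ∈ range m, (i:ℝ)) * 2 = m * (m - 1) := by
        have := Finset.sum_range_id_mul_two m
        have h2 := congrArg (Nat.cast : ℕ → ℝ) this
        push_cast [Nat.cast_sub (show 1 ≤ m by omega)] at h2
        exact h2
      simp; linarith
    rw [← e]
    apply sum_le_sum
    intro p _
    rw [hid]
    have := mul_nonneg (show (0:ℝ) ≤ n by positivity) (ha0 p)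
    linarith
  have b3 : p0 + (m - 1) * Bt ≤ 2 / m := by
    rw [le_div_iff₀ (by linarith)]
    nlinarith
  -- formula at A
  rw [form z A hA]
  have c1 : ∑ i, ∑ b ∈ Ico (A i).card (m-1), α b = T.card * a k := by
    rw [← sum_subset (subset_univ T)]
    · rw [sum_congr rfl (fun i hi => by rw [hT i hi]), sum_const, nsmul_eq_mul]
    · intro i _ hi; rw [hT' i hi]; simp
  have c2 : ∑ x ∈ univ.erase z, ∑ s ∈ range (univ.filter fun j => x ∉ A j).card, β s
      ≤ (m - 1) * Bt := by
    calc _ ≤ ∑ x ∈ univ.erase z, Bt := by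
          apply sum_le_sum
          intro x _
          apply sum_le_sum_of_subset_of_nonneg
          · apply range_subset_range.2
            calc _ ≤ (univ : Finset (Fin n)).card := card_le_card (filter_subset _ _)
              _ = n := by simp
          · intro s hs _; exact hβ s (mem_range.1 hs)
      _ = _ := by
          rw [sum_const, card_erase_of_mem (by simp), nsmul_eq_mul]
          simp [Nat.cast_sub (show 1 ≤ m by omega)]
  have c3 : (T.card:ℝ) * a k ≤ T.card / (n * (k + 1)) := by
    rw [le_div_iff₀ (by positivity)]
    have : (0:ℝ) ≤ T.card := by positivity
    nlinarith
  rw [c1]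
  linarith

end core2

section utilities

/-- Rank (starting at zero) of a candidate for a key. -/
def rkey {m : ℕ} (κ : Fin m → ℕ) (j : Fin m) : ℕ := (univ.filter fun j' => κ j' < κ j).card

/-- Equally spaced utility with a given order. -/
noncomputable def baseU {m : ℕ} (κ : Fin m → ℕ) (j : Fin m) : ℝ :=
  1 - (rkey κ j : ℝ) / ((m : ℝ) - 1)

/-- Perturbed indicator utility. -/
noncomputable def utilU {m : ℕ} (κ : Fin m → ℕ) (A : Finset (Fin m)) (ε : ℝ) (j : Fin m) : ℝ :=
  (1 - ε) * (if j ∈ A then 1 else 0) + ε * baseU κ j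

variable {m : ℕ}

lemma rkey_lt {κ : Fin m → ℕ} {a b : Fin m} (h : κ a < κ b) : rkey κ a < rkey κ b := by
  unfold rkey
  apply card_lt_card
  rw [ssubset_iff_of_subset]
  · exact ⟨a, by simpa using h, by simp⟩
  · intro j; simp only [mem_filter, mem_univ, true_and]; intro hj; omega

lemma rkey_le (κ : Fin m → ℕ) (j : Fin m) : rkey κ j ≤ m - 1 := by
  unfold rkey
  calc _ ≤ (univ.erase j).card := by
        apply card_le_card
        intro x; simp only [mem_filter, mem_univ, true_and, mem_erase, and_true]
        rintro h rfl; omega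
    _ = m - 1 := by simp

lemma baseU_lt (hm : 2 ≤ m) {κ : Fin m → ℕ} {a b : Fin m} (h : κ a < κ b) :
    baseU κ b < baseU κ a := by
  have h1 : (0 : ℝ) < (m : ℝ) - 1 := by
    have : (2 : ℝ) ≤ m := by exact_mod_cast hm
    linarith
  have h2 : (rkey κ a : ℝ) < rkey κ b := by exact_mod_cast rkey_lt h
  unfold baseU
  have := div_lt_div_of_pos_right h2 h1
  linarith

lemma baseU_mem (hm : 2 ≤ m) (κ : Fin m → ℕ) (j : Fin m) : 0 ≤ baseU κ j ∧ baseU κ j ≤ 1 := by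
  have h1 : (0 : ℝ) < (m : ℝ) - 1 := by
    have : (2 : ℝ) ≤ m := by exact_mod_cast hm
    linarith
  have h2 : (rkey κ j : ℝ) ≤ (m : ℝ) - 1 := by
    have : ((rkey κ j : ℕ) : ℝ) ≤ ((m - 1 : ℕ) : ℝ) := by exact_mod_cast rkey_le κ j
    rwa [Nat.cast_sub (by omega), Nat.cast_one] at this
  unfold baseU
  have := (div_le_one h1).2 h2
  have : 0 ≤ (rkey κ j : ℝ) / ((m : ℝ) - 1) := by positivity
  constructor <;> linarith

lemma baseU_top (hm : 2 ≤ m) (κ : Fin m → ℕ) : ∃ t, baseU κ t = 1 ∧ ∀ j, κ t ≤ κ j := by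
  obtain ⟨t, -, ht⟩ := exists_min_image (univ : Finset (Fin m)) κ ⟨⟨0, by omega⟩, mem_univ _⟩
  refine ⟨t, ?_, fun j => ht j (mem_univ _)⟩
  have : rkey κ t = 0 := by
    unfold rkey
    rw [card_eq_zero, filter_eq_empty_iff]
    intro x hx; have := ht x hx; omega
  simp [baseU, this]

lemma baseU_bot (hm : 2 ≤ m) {κ : Fin m → ℕ} (hκ : Function.Injective κ) :
    ∃ t, baseU κ t = 0 ∧ ∀ j, κ j ≤ κ t := by
  obtain ⟨t, -, ht⟩ := exists_max_image (univ : Finset (Fin m)) κ ⟨⟨0, by omega⟩, mem_univ _⟩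
  refine ⟨t, ?_, fun j => ht j (mem_univ _)⟩
  have : rkey κ t = m - 1 := by
    unfold rkey
    have : (univ.filter fun j' => κ j' < κ t) = univ.erase t := by
      ext x
      simp only [mem_filter, mem_univ, true_and, mem_erase, and_true]
      constructor
      · rintro h rfl; omega
      · intro h
        exact lt_of_le_of_ne (ht x (mem_univ _)) (fun h' => h (hκ h'))
    rw [this]; simp
  have h1 : (0 : ℝ) < (m : ℝ) - 1 := by
    have : (2 : ℝ) ≤ m := by exact_mod_cast hm
    linarith
  simp only [baseU, this]
  rw [Nat.cast_sub (by omega), Nat.cast_one, div_self h1.ne']; ring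

lemma order_iff {κ : Fin m → ℕ} (hκ : Function.Injective κ) {u : Fin m → ℝ}
    (h : ∀ a b, κ a < κ b → u b < u a) (a b : Fin m) : u a < u b ↔ κ b < κ a := by
  constructor
  · intro hu
    rcases lt_trichotomy (κ a) (κ b) with h1 | h1 | h1
    · have := h _ _ h1; linarith
    · rw [hκ h1] at hu; exact absurd hu (lt_irrefl _)
    · exact h1
  · exact h _ _

lemma inj_of_order {κ : Fin m → ℕ} (hκ : Function.Injective κ) {u : Fin m → ℝ}
    (h : ∀ a b, κ a < κ b → u b < u a) : Function.Injective u := by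
  intro a b hab
  rcases lt_trichotomy (κ a) (κ b) with h1 | h1 | h1
  · have := h _ _ h1; linarith
  · exact hκ h1
  · have := h _ _ h1; linarith

lemma baseU_pref (hm : 2 ≤ m) {κ : Fin m → ℕ} (hκ : Function.Injective κ) :
    IsPrefU (baseU κ) := by
  obtain ⟨t, ht, -⟩ := baseU_top hm κ
  obtain ⟨b, hb, -⟩ := baseU_bot hm hκ
  exact ⟨⟨baseU_mem hm κ, ⟨b, hb⟩, ⟨t, ht⟩⟩, inj_of_order hκ fun a b h => baseU_lt hm h⟩

lemma utilU_lt (hm : 2 ≤ m) {κ : Fin m → ℕ} {A : Finset (Fin m)}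
    (hA : ∀ a ∈ A, ∀ b, b ∉ A → κ a < κ b) {ε : ℝ} (h0 : 0 < ε) (h1 : ε ≤ 1)
    {a b : Fin m} (h : κ a < κ b) : utilU κ A ε b < utilU κ A ε a := by
  have h2 := mul_lt_mul_of_pos_left (baseU_lt hm h) h0
  unfold utilU
  by_cases hb : b ∈ A
  · have ha : a ∈ A := by
      by_contra ha
      have := hA b hb a ha; omega
    simp only [ha, hb, if_true]; linarith
  · simp only [hb, if_false]
    have : 0 ≤ (1 - ε) * (if a ∈ A then (1 : ℝ) else 0) := by
      apply mul_nonneg (by linarith); split_ifs <;> norm_num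
    linarith

lemma utilU_pref (hm : 2 ≤ m) {κ : Fin m → ℕ} (hκ : Function.Injective κ) {A : Finset (Fin m)}
    (hA : ∀ a ∈ A, ∀ b, b ∉ A → κ a < κ b) {ε : ℝ} (h0 : 0 < ε) (h1 : ε ≤ 1)
    (hne : A.Nonempty) (hu : A ≠ univ) : IsPrefU (utilU κ A ε) := by
  obtain ⟨t, ht, ht'⟩ := baseU_top hm κ
  obtain ⟨b, hb, hb'⟩ := baseU_bot hm hκ
  refine ⟨⟨?_, ⟨b, ?_⟩, ⟨t, ?_⟩⟩, inj_of_order hκ fun a b h => utilU_lt hm hA h0 h1 h⟩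
  · intro j
    have := baseU_mem hm κ j
    unfold utilU
    split_ifs <;> constructor <;> nlinarith
  · have : b ∉ A := by
      intro hbA
      apply hu
      rw [eq_univ_iff_forall]
      intro x; by_contra hx
      have := hA b hbA x hx
      have := hb' x; omega
    simp [utilU, this, hb]
  · have : t ∈ A := by
      by_contra htA
      obtain ⟨x, hx⟩ := hne
      have := hA x hx t htA
      have := ht' x; omega
    simp [utilU, this, ht]

end utilities

section ordmech

variable {n m : ℕ}

/-- The mechanism on keys induced by an ordinal mechanism. -/
noncomputable def keyMech (J : (Fin n → Fin m → ℝ) → Fin m → ℝ) (κ : Fin n → Fin m → ℕ) :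
    Fin m → ℝ := J (fun i => baseU (κ i))

lemma keyMech_dist (hm : 2 ≤ m) {J : (Fin n → Fin m → ℝ) → Fin m → ℝ} (hJ : MechU J)
    {κ : Fin n → Fin m → ℕ} (hκ : ∀ i, Function.Injective (κ i)) : IsDist (keyMech J κ) :=
  hJ _ fun i => baseU_pref hm (hκ i)

lemma keyMech_eq (hm : 2 ≤ m) {J : (Fin n → Fin m → ℝ) → Fin m → ℝ} (hO : OrdinalMech J)
    {κ : Fin n → Fin m → ℕ} (hκ : ∀ i, Function.Injective (κ i)) {u : Fin n → Fin m → ℝ}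
    (hu : IsProfileU u) (h : ∀ i a b, κ i a < κ i b → u i b < u i a) : J u = keyMech J κ := by
  apply hO _ _ hu fun i => baseU_pref hm (hκ i)
  intro i a b
  rw [order_iff (hκ i) (h i), order_iff (hκ i) (fun a b h => baseU_lt hm h)]

lemma nonneg_of_eps {X Y : ℝ} (h : ∀ ε : ℝ, 0 < ε → ε ≤ 1 → 0 ≤ (1 - ε) * X + ε * Y) : 0 ≤ X := by
  by_contra hX
  push Not at hX
  have hd : 0 < -X + |Y| + 1 := by have := abs_nonneg Y; linarith
  have h1 := h ((-X) / (2 * (-X + |Y| + 1))) (by apply div_pos <;> linarith)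
    (by rw [div_le_one (by linarith)]; have := abs_nonneg Y; linarith)
  have h2 : (1 - (-X) / (2 * (-X + |Y| + 1))) * X + (-X) / (2 * (-X + |Y| + 1)) * Y
      = ((X * (2 * (-X + |Y| + 1))) + (-X) * (Y - X)) / (2 * (-X + |Y| + 1)) := by
    field_simp
    ring
  rw [h2] at h1
  have h3 : ((X * (2 * (-X + |Y| + 1))) + (-X) * (Y - X)) < 0 := by
    have : (X * (2 * (-X + |Y| + 1))) + (-X) * (Y - X) = X * (-X + 2 * |Y| + 2 - Y) := by ring
    rw [this]
    apply mul_neg_of_neg_of_pos hX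
    have := le_abs_self Y
    have := abs_nonneg Y
    linarith
  have := div_neg_of_neg_of_pos h3 (show 0 < 2 * (-X + |Y| + 1) by linarith)
  linarith

lemma keyMech_truth (hm : 2 ≤ m) {J : (Fin n → Fin m → ℝ) → Fin m → ℝ} (hJ : MechU J)
    (hO : OrdinalMech J) (hT : Truthful J) {κ : Fin n → Fin m → ℕ}
    (hκ : ∀ i, Function.Injective (κ i)) (i : Fin n) {ρ : Fin m → ℕ}
    (hρ : Function.Injective ρ) (A : Finset (Fin m))
    (hA : ∀ a ∈ A, ∀ b, b ∉ A → κ i a < κ i b) :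
    ∑ j ∈ A, keyMech J (Function.update κ i ρ) j ≤ ∑ j ∈ A, keyMech J κ j := by
  rcases A.eq_empty_or_nonempty with rfl | hne
  · simp
  by_cases hu : A = univ
  · subst hu
    rw [(keyMech_dist hm hJ hκ).2, (keyMech_dist hm hJ (inj_update hκ i hρ)).2]
  rw [← sub_nonneg]
  apply nonneg_of_eps (Y := ∑ j, (keyMech J κ j - keyMech J (Function.update κ i ρ) j)
    * baseU (κ i) j)
  intro ε h0 h1
  set u : Fin n → Fin m → ℝ := Function.update (fun i => baseU (κ i)) i (utilU (κ i) A ε) with hudef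
  have hui : u i = utilU (κ i) A ε := by simp [hudef]
  have hpu : IsProfileU u := by
    intro i'
    by_cases h : i' = i
    · subst h; rw [hui]; exact utilU_pref hm (hκ _) hA h0 h1 hne hu
    · simp only [hudef, Function.update_of_ne h]; exact baseU_pref hm (hκ _)
  have hpv : IsProfileU (Function.update u i (baseU ρ)) := by
    intro i'
    by_cases h : i' = i
    · subst h; simp only [Function.update_self]; exact baseU_pref hm hρ
    · simp only [Function.update_of_ne h]; exact hpu i'
  have e1 : J u = keyMech J κ := by
    apply keyMech_eq hm hO hκ hpu
    intro i' a b hab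
    by_cases h : i' = i
    · subst h; rw [hui]; exact utilU_lt hm hA h0 h1 hab
    · simp only [hudef, Function.update_of_ne h]; exact baseU_lt hm hab
  have e2 : J (Function.update u i (baseU ρ)) = keyMech J (Function.update κ i ρ) := by
    apply keyMech_eq hm hO (inj_update hκ i hρ) hpv
    intro i' a b hab
    by_cases h : i' = i
    · subst h; simp only [Function.update_self] at hab ⊢; exact baseU_lt hm hab
    · simp only [hudef, Function.update_of_ne h] at hab ⊢; exact baseU_lt hm hab
  have key := hT u hpu i (baseU ρ) (baseU_pref hm hρ)
  rw [e1, e2, hui, ← sub_nonneg, ← sum_sub_distrib] at key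
  refine key.trans_eq ?_
  rw [← sum_sub_distrib, mul_sum, mul_sum]
  rw [← sum_filter_add_sum_filter_not univ (fun j => j ∈ A)] 
  have : ∑ j ∈ A, (1 - ε) * (keyMech J κ j - keyMech J (Function.update κ i ρ) j)
      = ∑ j, (if j ∈ A then (1 - ε) * (keyMech J κ j - keyMech J (Function.update κ i ρ) j) else 0) := by
    rw [← sum_filter]; simp
  rw [this, ← sum_add_distrib, sum_filter_add_sum_filter_not univ (fun j => j ∈ A)]
  apply sum_congr rfl
  intro j _
  unfold utilU
  split_ifs <;> ring

end ordmech

section symm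

variable {n m : ℕ}

/-- Symmetrization of a key mechanism over voters and candidates. -/
noncomputable def symMech (P : (Fin n → Fin m → ℕ) → Fin m → ℝ) (κ : Fin n → Fin m → ℕ)
    (j : Fin m) : ℝ :=
  (∑ σ : Equiv.Perm (Fin n), ∑ τ : Equiv.Perm (Fin m),
    P (fun i => κ (σ i) ∘ τ) (τ.symm j)) /
    ((Fintype.card (Equiv.Perm (Fin n)) : ℝ) * (Fintype.card (Equiv.Perm (Fin m)) : ℝ))

lemma inj_act {κ : Fin n → Fin m → ℕ} (hκ : ∀ i, Function.Injective (κ i))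
    (σ : Equiv.Perm (Fin n)) (τ : Equiv.Perm (Fin m)) :
    ∀ i, Function.Injective (κ (σ i) ∘ τ) := fun i => (hκ _).comp τ.injective

lemma sym_pos : 0 < ((Fintype.card (Equiv.Perm (Fin n)) : ℝ) *
    (Fintype.card (Equiv.Perm (Fin m)) : ℝ)) := by
  have h1 : 0 < Fintype.card (Equiv.Perm (Fin n)) := Fintype.card_pos
  have h2 : 0 < Fintype.card (Equiv.Perm (Fin m)) := Fintype.card_pos
  have h1' : (0 : ℝ) < Fintype.card (Equiv.Perm (Fin n)) := by exact_mod_cast h1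
  have h2' : (0 : ℝ) < Fintype.card (Equiv.Perm (Fin m)) := by exact_mod_cast h2
  exact mul_pos h1' h2'

lemma symMech_sum (P : (Fin n → Fin m → ℕ) → Fin m → ℝ) (κ : Fin n → Fin m → ℕ)
    (A : Finset (Fin m)) (w : Fin m → ℝ) :
    ∑ j ∈ A, symMech P κ j * w j =
      (∑ σ : Equiv.Perm (Fin n), ∑ τ : Equiv.Perm (Fin m),
        ∑ j ∈ A.map τ.symm.toEmbedding, P (fun i => κ (σ i) ∘ τ) j * w (τ j)) /
      ((Fintype.card (Equiv.Perm (Fin n)) : ℝ) * (Fintype.card (Equiv.Perm (Fin m)) : ℝ)) := by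
  simp only [symMech, div_mul_eq_mul_div]
  rw [← sum_div]
  congr 1
  simp only [sum_mul]
  rw [sum_comm]
  apply sum_congr rfl; intro σ _
  rw [sum_comm]
  apply sum_congr rfl; intro τ _
  rw [sum_map]
  simp

lemma symMech_good (P : (Fin n → Fin m → ℕ) → Fin m → ℝ)
    (hd : ∀ κ : Fin n → Fin m → ℕ, (∀ i, Function.Injective (κ i)) → IsDist (P κ))
    (ht : ∀ κ : Fin n → Fin m → ℕ, (∀ i, Function.Injective (κ i)) → ∀ i (ρ : Fin m → ℕ),
      Function.Injective ρ →
      ∀ A : Finset (Fin m), (∀ a ∈ A, ∀ b, b ∉ A → κ i a < κ i b) →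
        ∑ j ∈ A, P (Function.update κ i ρ) j ≤ ∑ j ∈ A, P κ j) :
    GoodMech (symMech P) where
  nonneg κ hκ j := by
    unfold symMech
    apply div_nonneg _ sym_pos.le
    exact sum_nonneg fun σ _ => sum_nonneg fun τ _ => (hd _ (inj_act hκ σ τ)).1 _
  sum_one κ hκ := by
    have := symMech_sum P κ univ (fun _ => 1)
    simp only [mul_one] at this
    rw [this, div_eq_one_iff_eq sym_pos.ne']
    have h : ∀ (σ : Equiv.Perm (Fin n)) (τ : Equiv.Perm (Fin m)),
        ∑ j ∈ (univ : Finset (Fin m)).map τ.symm.toEmbedding, P (fun i => κ (σ i) ∘ τ) j = 1 := by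
      intro σ τ
      rw [map_univ_equiv]
      exact (hd _ (inj_act hκ σ τ)).2
    simp only [h]
    simp
  truth κ hκ i ρ hρ A hA := by
    have e1 := symMech_sum P κ A (fun _ => 1)
    have e2 := symMech_sum P (Function.update κ i ρ) A (fun _ => 1)
    simp only [mul_one] at e1 e2
    rw [e1, e2]
    apply div_le_div_of_nonneg_right _ sym_pos.le
    apply sum_le_sum; intro σ _
    apply sum_le_sum; intro τ _
    have h := ht (fun i => κ (σ i) ∘ τ) (inj_act hκ σ τ) (σ.symm i) (ρ ∘ τ)
      (hρ.comp τ.injective) (A.map τ.symm.toEmbedding) (by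
        intro a ha b hb
        simp only [mem_map_equiv, Equiv.symm_symm] at ha hb
        simpa using hA _ ha _ hb)
    refine le_trans (le_of_eq ?_) h
    have : (fun i_1 => Function.update κ i ρ (σ i_1) ∘ τ)
        = Function.update (fun i => κ (σ i) ∘ τ) (σ.symm i) (ρ ∘ τ) := by
      funext i'
      by_cases hi : i' = σ.symm i
      · subst hi; simp
      · have : σ i' ≠ i := fun h => hi (by rw [← h]; simp)
        simp [this, hi]
    rw [this]
  neutral κ hκ π j := by
    unfold symMech
    congr 1
    apply sum_congr rfl; intro σ _
    apply Fintype.sum_equiv (Equiv.mulLeft π)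
    intro τ
    have : (Equiv.mulLeft π τ).symm (π j) = τ.symm j := by
      rw [Equiv.symm_apply_eq]; simp
    rw [this]
    rfl
  anon κ hκ π := by
    funext j
    unfold symMech
    congr 1
    apply Fintype.sum_equiv (Equiv.mulLeft π)
    intro σ
    rfl

/-- Transfer: a profile bad for the symmetrized mechanism yields one bad for the original. -/
lemma transfer (hm : 2 ≤ m) {J : (Fin n → Fin m → ℝ) → Fin m → ℝ}
    (hO : OrdinalMech J) {κ : Fin n → Fin m → ℕ}
    (hκ : ∀ i, Function.Injective (κ i)) {u : Fin n → Fin m → ℝ}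
    (hu : IsProfileU u) (h : ∀ i a b, κ i a < κ i b → u i b < u i a) (z : Fin m) (c : ℝ)
    (hc : 0 ≤ c) (hb : ∑ j, symMech (keyMech J) κ j * Wel j u ≤ c * Wel z u) :
    ∃ v : Fin n → Fin m → ℝ, IsProfileU v ∧ expWel J v ≤ c * Wel (RV (show 0 < m by omega) v) v := by
  by_contra hcon
  push Not at hcon
  have hpv : ∀ (σ : Equiv.Perm (Fin n)) (τ : Equiv.Perm (Fin m)),
      IsProfileU (fun i => u (σ i) ∘ τ) := by
    intro σ τ i
    obtain ⟨⟨h1, ⟨a, ha⟩, ⟨b, hb⟩⟩, h2⟩ := hu (σ i)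
    exact ⟨⟨fun j => h1 _, ⟨τ.symm a, by simpa using ha⟩, ⟨τ.symm b, by simpa using hb⟩⟩,
      h2.comp τ.injective⟩
  have hw : ∀ (σ : Equiv.Perm (Fin n)) (τ : Equiv.Perm (Fin m)) j,
      Wel j (fun i => u (σ i) ∘ τ) = Wel (τ j) u := by
    intro σ τ j
    unfold Wel
    exact Equiv.sum_comp σ (fun i => u i (τ j))
  have hlt : ∀ (σ : Equiv.Perm (Fin n)) (τ : Equiv.Perm (Fin m)), c * Wel z u <
      ∑ j, keyMech J (fun i => κ (σ i) ∘ τ) j * Wel (τ j) u := by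
    intro σ τ
    have h1 := hcon _ (hpv σ τ)
    have h2 : expWel J (fun i => u (σ i) ∘ τ) =
        ∑ j, keyMech J (fun i => κ (σ i) ∘ τ) j * Wel (τ j) u := by
      unfold expWel
      rw [keyMech_eq hm hO (inj_act hκ σ τ) (hpv σ τ) (fun i a b hab => h _ _ _ hab)]
      simp only [hw]
    rw [← h2]
    refine lt_of_le_of_lt ?_ h1
    apply mul_le_mul_of_nonneg_left _ hc
    have h3 := min'_mem (univ.filter fun j => ∀ j', Wel j' (fun i => u (σ i) ∘ τ) ≤
      Wel j (fun i => u (σ i) ∘ τ)) (by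
        obtain ⟨j, -, hj⟩ := Finset.exists_max_image (Finset.univ : Finset (Fin m))
          (fun j => Wel j (fun i => u (σ i) ∘ τ)) ⟨⟨0, by omega⟩, Finset.mem_univ _⟩
        exact ⟨j, Finset.mem_filter.2 ⟨Finset.mem_univ _, fun j' => hj j' (Finset.mem_univ _)⟩⟩)
    have h4 := (mem_filter.1 h3).2 (τ.symm z)
    rw [hw σ τ (τ.symm z), Equiv.apply_symm_apply] at h4
    exact h4
  rw [symMech_sum, div_le_iff₀ sym_pos] at hb
  have : ∑ _σ : Equiv.Perm (Fin n), ∑ _τ : Equiv.Perm (Fin m), c * Wel z u <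
      ∑ σ : Equiv.Perm (Fin n), ∑ τ : Equiv.Perm (Fin m),
        ∑ j ∈ univ.map τ.symm.toEmbedding, keyMech J (fun i => κ (σ i) ∘ τ) j * Wel (τ j) u := by
    apply sum_lt_sum_of_nonempty univ_nonempty; intro σ _
    apply sum_lt_sum_of_nonempty univ_nonempty; intro τ _
    rw [map_univ_equiv]
    exact hlt σ τ
  simp only [sum_const, nsmul_eq_mul, card_univ] at this
  linarith

end symm

section badprofile

lemma cnt_mod {n : ℕ} (N q c : ℕ) (hq : 0 < q) :
    (((univ : Finset (Fin n)).filter fun i => i.val < N ∧ i.val % q = c).card : ℝ)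
      ≤ (N : ℝ) / q + 1 := by
  have h1 : ((univ : Finset (Fin n)).filter fun i => i.val < N ∧ i.val % q = c).card
      ≤ (range (N / q + 1)).card := by
    apply card_le_card_of_injOn (fun i : Fin n => i.val / q)
    · intro i hi
      simp only [coe_filter, mem_univ, true_and, Set.mem_setOf_eq] at hi
      simp only [coe_range, Set.mem_Iio]
      exact Nat.lt_succ_of_le (Nat.div_le_div_right hi.1.le)
    · intro i hi j hj hij
      simp only [coe_filter, mem_univ, true_and, Set.mem_setOf_eq] at hi hj
      have e1 := Nat.div_add_mod i.val q
      have e2 := Nat.div_add_mod j.val q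
      simp only at hij
      apply Fin.ext
      rw [← e1, ← e2, hij, hi.2, hj.2]
  rw [card_range] at h1
  calc _ ≤ ((N / q + 1 : ℕ) : ℝ) := by exact_mod_cast h1
    _ ≤ _ := by
      push_cast
      have := Nat.cast_div_le (α := ℝ) (m := N) (n := q)
      linarith

lemma block_card {m : ℕ} (k c : ℕ) (hk : 0 < k) (h : c * k + k ≤ m) :
    ((univ : Finset (Fin m)).filter fun j => j.val / k = c).card = k := by
  conv_rhs => rw [← card_range k]
  symm
  apply card_bij (fun t ht => (⟨c * k + t, by have := mem_range.1 ht; omega⟩ : Fin m))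
  · intro t ht
    have := mem_range.1 ht
    simp only [mem_filter, mem_univ, true_and]
    rw [Nat.mul_comm, Nat.mul_add_div hk, Nat.div_eq_of_lt this]; rfl
  · intro a _ b _ hab
    have := congrArg Fin.val hab
    simp only at this; omega
  · intro b hb
    simp only [mem_filter, mem_univ, true_and] at hb
    refine ⟨b.val % k, mem_range.2 (Nat.mod_lt _ hk), ?_⟩
    apply Fin.ext
    simp only
    rw [← hb, Nat.mul_comm]; exact Nat.div_add_mod _ _

/-- Candidate sets supported by the voters in the bad profile. -/
def suppS (m k g q : ℕ) (i : ℕ) (j : Fin m) : Prop :=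
  (i < g ∧ (j.val / k = i % q ∨ j.val = m - 1)) ∨ (¬ i < g ∧ j.val = i % (m - 1))

instance (m k g q i : ℕ) (j : Fin m) : Decidable (suppS m k g q i j) := by
  unfold suppS; infer_instance

/-- Levels of the candidates in the bad profile. -/
def levS (m k g q : ℕ) (i : ℕ) (j : Fin m) : ℕ :=
  if i < g then (if j.val / k = i % q then 0 else if j.val = m - 1 then 1 else 2)
  else (if j.val = i % (m - 1) then 0 else if j.val = m - 1 then 2 else 1)

lemma levS_lt {m k g q i : ℕ} {a b : Fin m} (h : i % (m - 1) < m - 1)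
    (ha : (i < g ∧ (a.val / k = i % q ∨ a.val = m - 1)) ∨ (¬ i < g ∧ a.val = i % (m - 1)))
    (hb : ¬ ((i < g ∧ (b.val / k = i % q ∨ b.val = m - 1)) ∨ (¬ i < g ∧ b.val = i % (m - 1)))) :
    levS m k g q i a < levS m k g q i b := by
  unfold levS
  generalize a.val / k = x at *
  generalize b.val / k = y at *
  generalize i % q = w at *
  generalize i % (m - 1) = t at *
  split_ifs <;> omega

lemma levS_key {m k g q i : ℕ} {z : Fin m} (hz : z.val = m - 1) (h : i % (m - 1) < m - 1)
    (h3 : (m - 1) / k ≠ i % q) (j : Fin m) :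
    okey (levS m k g q i) j < okey (levS m k g q i) z ↔
      ((i < g ∧ j.val / k = i % q) ∨ (¬ i < g ∧ j.val ≠ m - 1)) := by
  rw [okey_lt_iff]
  · unfold levS
    rw [hz]
    generalize (m - 1) / k = x at *
    generalize j.val / k = y at *
    generalize i % q = w at *
    generalize i % (m - 1) = t at *
    split_ifs <;> omega
  · intro j'
    unfold levS
    rw [Fin.ext_iff, hz]
    generalize (m - 1) / k = x at *
    generalize j'.val / k = y at *
    generalize i % q = w at *
    generalize i % (m - 1) = t at *
    intro hl
    split_ifs at hl <;> omega

lemma utilU_le {m : ℕ} (hm : 2 ≤ m) (κ : Fin m → ℕ) (A : Finset (Fin m)) {ε : ℝ} (h0 : 0 < ε)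
    (j : Fin m) : utilU κ A ε j ≤ (if j ∈ A then 1 else 0) + ε := by
  have := baseU_mem hm κ j
  unfold utilU
  split_ifs <;> nlinarith

lemma le_utilU {m : ℕ} (hm : 2 ≤ m) (κ : Fin m → ℕ) (A : Finset (Fin m)) {ε : ℝ} (h0 : 0 < ε)
    (h1 : ε ≤ 1) (j : Fin m) : (1 - ε) * (if j ∈ A then 1 else 0) ≤ utilU κ A ε j := by
  have := baseU_mem hm κ j
  unfold utilU
  nlinarith

set_option maxHeartbeats 1000000 in
lemma bad_profile {n m k : ℕ} (hk : 2 ≤ k) (hkm : k ^ 3 ≤ m) (hnm : m - 1 ≤ n)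
    {Q : (Fin n → Fin m → ℕ) → Fin m → ℝ} (hQ : GoodMech Q) :
    ∃ (κ : Fin n → Fin m → ℕ) (u : Fin n → Fin m → ℝ) (z : Fin m),
      (∀ i, Function.Injective (κ i)) ∧ IsProfileU u ∧
      (∀ i a b, κ i a < κ i b → u i b < u i a) ∧
      ∑ j, Q κ j * Wel j u ≤ 42 / (k : ℝ) ^ 2 * Wel z u := by
  -- basic numerics
  have hk4 : 4 * k ≤ m := by
    have : 4 * k ≤ k ^ 3 := by nlinarith [Nat.mul_le_mul hk hk]
    omega
  have hm : 2 ≤ m := by omega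
  have hn : 1 ≤ n := by omega
  obtain ⟨g, hg⟩ : ∃ g, g = n / k := ⟨_, rfl⟩
  obtain ⟨q, hq⟩ : ∃ q, q = (m - 1) / k := ⟨_, rfl⟩
  have hgk : g * k ≤ n := hg ▸ Nat.div_mul_le_self n k
  have hgk' : n < g * k + k := by
    have := Nat.lt_div_mul_add (a := n) (b := k) (by omega)
    rw [hg]; exact this
  have hqk : q * k ≤ m - 1 := hq ▸ Nat.div_mul_le_self (m - 1) k
  have hqk' : m - 1 < q * k + k := by
    have := Nat.lt_div_mul_add (a := m - 1) (b := k) (by omega)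
    rw [hq]; exact this
  have hq0 : 0 < q := by
    rcases Nat.eq_zero_or_pos q with h | h
    · subst h; omega
    · exact h
  have hg0 : 0 < g := by
    rcases Nat.eq_zero_or_pos g with h | h
    · subst h; omega
    · exact h
  have hgn : g ≤ n := by nlinarith
  have hnR : (1 : ℝ) ≤ n := by exact_mod_cast hn
  set ε : ℝ := 1 / n with hε
  have hε0 : 0 < ε := by positivity
  have hε2 : ε ≤ 1 / 2 := by
    rw [hε]
    apply one_div_le_one_div_of_le (by norm_num)
    have : 2 ≤ n := by omega
    exact_mod_cast this
  obtain ⟨z, hzz⟩ : ∃ z : Fin m, z.val = m - 1 := ⟨⟨m - 1, by omega⟩, rfl⟩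
  obtain ⟨S, hSm⟩ : ∃ S : Fin n → Finset (Fin m), ∀ i j, j ∈ S i ↔
      ((i.val < g ∧ (j.val / k = i.val % q ∨ j.val = m - 1)) ∨
        (¬ i.val < g ∧ j.val = i.val % (m - 1))) :=
    ⟨fun i => univ.filter fun j => suppS m k g q i j, fun i j => by
      rw [mem_filter]; simp only [suppS, mem_univ, true_and]⟩
  obtain ⟨κ, hκd⟩ : ∃ κ : Fin n → Fin m → ℕ, ∀ i : Fin n, κ i = okey (levS m k g q i) :=
    ⟨_, fun i => rfl⟩
  obtain ⟨u, hud⟩ : ∃ u : Fin n → Fin m → ℝ, ∀ i, u i = utilU (κ i) (S i) ε :=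
    ⟨_, fun i => rfl⟩
  have hmodq : ∀ i : ℕ, i % q * k + k ≤ m - 1 := by
    intro i
    have := Nat.mod_lt i hq0
    have : (i % q + 1) * k ≤ q * k := Nat.mul_le_mul_right _ this
    nlinarith
  have hzk : ∀ i : ℕ, (m - 1) / k ≠ i % q := by
    intro i
    have := Nat.mod_lt i hq0
    omega
  have hmodm : ∀ i : ℕ, i % (m - 1) < m - 1 := fun i => Nat.mod_lt i (by omega)
  have hκ : ∀ i, Function.Injective (κ i) := fun i => hκd i ▸ okey_inj _
  have hS : ∀ i, ∀ a ∈ S i, ∀ b, b ∉ S i → κ i a < κ i b := by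
    intro i a ha b hb
    rw [hκd]
    apply okey_lt
    rw [hSm] at ha hb
    exact levS_lt (hmodm i) ha hb
  have hSne : ∀ i, (S i).Nonempty := by
    intro i
    by_cases h : i.val < g
    · exact ⟨z, (hSm i z).2 (Or.inl ⟨h, Or.inr hzz⟩)⟩
    · have := hmodm i
      exact ⟨⟨i % (m - 1), by omega⟩, (hSm _ _).2 (Or.inr ⟨h, rfl⟩)⟩
  have hScard : ∀ i, S i ≠ univ := by
    intro i hi
    by_cases h : i.val < g
    · -- block has at most k + 1 elements
      have h1 : S i ⊆ insert z ((univ : Finset (Fin m)).filter fun j => j.val / k = i.val % q) := by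
        intro j hj
        rw [mem_insert, mem_filter]
        rcases (hSm i j).1 hj with ⟨_, hj | hj⟩ | hj
        · exact Or.inr ⟨mem_univ _, hj⟩
        · exact Or.inl (Fin.ext (hj.trans hzz.symm))
        · exact absurd h hj.1
      have h2 := card_le_card h1
      have h3 := card_insert_le z ((univ : Finset (Fin m)).filter fun j => j.val / k = i.val % q)
      rw [block_card k (i.val % q) (by omega) (by have := hmodq i; omega)] at h3
      rw [hi, card_univ, Fintype.card_fin] at h2
      omega
    · have : z ∈ S i := by rw [hi]; exact mem_univ _
      have h2 := hmodm i
      rcases (hSm i z).1 this with h3 | h3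
      · exact h h3.1
      · have := h3.2; omega
  have hpu : IsProfileU u := fun i => hud i ▸ utilU_pref hm (hκ i) (hS i) hε0 (by linarith) (hSne i) (hScard i)
  have hord : ∀ i a b, κ i a < κ i b → u i b < u i a := fun i a b h => by
    rw [hud]; exact utilU_lt hm (hS i) hε0 (by linarith) h
  refine ⟨κ, u, z, hκ, hpu, hord, ?_⟩
  -- the probability of z
  obtain ⟨T, hTm⟩ : ∃ T : Finset (Fin n), ∀ i, i ∈ T ↔ i.val < g :=
    ⟨univ.filter fun i => i.val < g, fun i => by rw [mem_filter]; simp⟩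
  have hTcard : T.card = g := by
    have : T.card = (range g).card := by
      symm
      apply card_bij (fun t ht => (⟨t, lt_of_lt_of_le (mem_range.1 ht) hgn⟩ : Fin n))
      · intro t ht; rw [hTm]; exact mem_range.1 ht
      · intro a _ b _ hab; exact congrArg Fin.val hab
      · intro b hb
        exact ⟨b.val, mem_range.2 ((hTm b).1 hb), rfl⟩
    rw [this, card_range]
  obtain ⟨AA, hAA1, hAA2⟩ : ∃ AA : Fin n → Finset (Fin m),
      (∀ i, i.val < g → AA i = univ.filter fun j => j.val / k = i.val % q) ∧
      (∀ i, ¬ i.val < g → AA i = univ.erase z) :=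
    ⟨fun i => if i.val < g then univ.filter fun j => j.val / k = i.val % q else univ.erase z,
      fun i h => if_pos h, fun i h => if_neg h⟩
  have hQz : Q κ z ≤ (g : ℝ) / (n * (k + 1)) + 2 / m := by
    rw [Fz_eq hQ hκ z AA, ← hTcard]
    · apply key_bound hm hn hQ z AA _ T k (by omega)
      · intro i hi
        rw [hAA1 i ((hTm i).1 hi)]
        exact block_card k (i.val % q) (by omega) (by have := hmodq i; omega)
      · intro i hi
        rw [hAA2 i (fun h => hi ((hTm i).2 h))]
        simp
      · intro i
        by_cases h : i.val < g
        · rw [hAA1 i h, mem_filter, hzz]; exact fun h' => hzk i h'.2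
        · rw [hAA2 i h]; simp
    · intro i j
      have h2 := hmodm i
      have h3 := hzk i
      rw [hκd, levS_key hzz h2 h3]
      by_cases h : i.val < g
      · rw [hAA1 i h, mem_filter]; simp [h]
      · rw [hAA2 i h, mem_erase]; simp [h, Fin.ext_iff, hzz]
  -- welfare of z
  have hWz : (g : ℝ) / 2 ≤ Wel z u := by
    have h1 : ∀ i, (1 / 2 : ℝ) * (if i ∈ T then 1 else 0) ≤ u i z := by
      intro i
      rw [hud]
      refine le_trans ?_ (le_utilU hm (κ i) (S i) hε0 (by linarith) z)
      by_cases h : i.val < g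
      · have e1 : i ∈ T := (hTm i).2 h
        have e2 : z ∈ S i := (hSm i z).2 (Or.inl ⟨h, Or.inr hzz⟩)
        simp only [e1, e2, if_true]; linarith
      · have e1 : i ∉ T := fun h' => h ((hTm i).1 h')
        simp only [e1, if_false]
        have : 0 ≤ (1 - ε) * (if z ∈ S i then (1 : ℝ) else 0) := by
          apply mul_nonneg (by linarith); split_ifs <;> norm_num
        linarith
    have h2 := sum_le_sum fun i (_ : i ∈ (univ : Finset (Fin n))) => h1 i
    rw [← mul_sum, ← sum_filter] at h2
    simp only [filter_mem_eq_inter, univ_inter, sum_const, hTcard, nsmul_eq_mul, mul_one] at h2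
    unfold Wel
    linarith
  -- welfare of the others
  have hmR : (2 : ℝ) ≤ m := by exact_mod_cast hm
  have hkR : (2 : ℝ) ≤ k := by exact_mod_cast hk
  have hqR : (0 : ℝ) < q := by exact_mod_cast hq0
  have hkmR : (k : ℝ) ^ 3 ≤ m := by exact_mod_cast hkm
  have hnm2 : (m : ℝ) ≤ 2 * n := by
    have : m ≤ 2 * n := by omega
    exact_mod_cast this
  have hgkR : (g : ℝ) * k ≤ n := by exact_mod_cast hgk
  have hgkR' : (n : ℝ) ≤ 2 * (g * k) := by
    have : n ≤ 2 * (g * k) := by nlinarith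
    exact_mod_cast this
  have hqkR : (m : ℝ) ≤ 2 * (q * k) := by
    have : m ≤ 2 * (q * k) := by omega
    exact_mod_cast this
  have hWj : ∀ j, j ≠ z → Wel j u ≤ 10 * n / m := by
    intro j hj
    have hj' : j.val ≠ m - 1 := fun h => hj (Fin.ext (h.trans hzz.symm))
    have h1 : Wel j u ≤ ((univ.filter fun i => j ∈ S i).card : ℝ) + 1 := by
      have h2 := sum_le_sum fun i (_ : i ∈ (univ : Finset (Fin n))) => utilU_le hm (κ i) (S i) hε0 j
      rw [sum_add_distrib, ← sum_filter] at h2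
      simp only [sum_const, nsmul_eq_mul, mul_one, card_univ, Fintype.card_fin] at h2
      have : (n : ℝ) * ε = 1 := by rw [hε]; field_simp
      unfold Wel
      simp only [hud]
      linarith
    have h3 : (univ.filter fun i => j ∈ S i) ⊆
        ((univ : Finset (Fin n)).filter fun i => i.val < g ∧ i.val % q = j.val / k) ∪
        ((univ : Finset (Fin n)).filter fun i => i.val < n ∧ i.val % (m - 1) = j.val) := by
      intro i hi
      have := i.2
      rw [mem_filter] at hi
      rw [mem_union, mem_filter, mem_filter]
      rcases (hSm i j).1 hi.2 with ⟨ha, hb | hb⟩ | ⟨ha, hb⟩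
      · exact Or.inl ⟨mem_univ _, ha, hb.symm⟩
      · exact absurd hb hj'
      · exact Or.inr ⟨mem_univ _, this, hb.symm⟩
    have h4 : ((univ.filter fun i => j ∈ S i).card : ℝ) ≤
        (((univ : Finset (Fin n)).filter fun i => i.val < g ∧ i.val % q = j.val / k).card : ℝ) +
        (((univ : Finset (Fin n)).filter fun i => i.val < n ∧ i.val % (m - 1) = j.val).card : ℝ) := by
      exact_mod_cast (card_le_card h3).trans (card_union_le _ _)
    have h5 := cnt_mod (n := n) g q (j.val / k) hq0
    have h6 := cnt_mod (n := n) n (m - 1) j.val (by omega)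
    have h7 : (g : ℝ) / q ≤ 2 * n / m := by
      rw [div_le_div_iff₀ hqR (by linarith)]
      nlinarith [mul_le_mul_of_nonneg_left hqkR (Nat.cast_nonneg g : (0 : ℝ) ≤ g),
        mul_le_mul_of_nonneg_left hgkR hqR.le]
    have h8 : (n : ℝ) / ((m - 1 : ℕ) : ℝ) ≤ 2 * n / m := by
      rw [Nat.cast_sub (by omega), Nat.cast_one]
      rw [div_le_div_iff₀ (by linarith) (by linarith)]
      nlinarith
    have h9 : (1 : ℝ) ≤ 2 * n / m := by
      rw [le_div_iff₀ (by linarith)]; linarith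
    have : 10 * (n : ℝ) / m = 5 * (2 * n / m) := by ring
    linarith
  -- assemble
  have hsum : ∑ j, Q κ j * Wel j u ≤ 10 * n / m + Q κ z * Wel z u := by
    rw [← add_sum_erase univ _ (mem_univ z), add_comm]
    apply add_le_add _ le_rfl
    have hB : (0 : ℝ) ≤ 10 * n / m := by positivity
    calc ∑ j ∈ univ.erase z, Q κ j * Wel j u
        ≤ ∑ j ∈ univ.erase z, Q κ j * (10 * n / m) := by
          apply sum_le_sum
          intro j hj
          exact mul_le_mul_of_nonneg_left (hWj j (ne_of_mem_erase hj)) (hQ.nonneg κ hκ j)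
      _ = (∑ j ∈ univ.erase z, Q κ j) * (10 * n / m) := by rw [sum_mul]
      _ ≤ 1 * (10 * n / m) := by
          apply mul_le_mul_of_nonneg_right _ hB
          rw [← hQ.sum_one κ hκ]
          exact sum_le_sum_of_subset_of_nonneg (erase_subset _ _) fun j _ _ => hQ.nonneg κ hκ j
      _ = _ := one_mul _
  have hW0 : 0 ≤ Wel z u := le_trans (by positivity) hWz
  have hQz2 : Q κ z ≤ 2 / (k : ℝ) ^ 2 := by
    have h1 : (g : ℝ) / (n * (k + 1)) ≤ 1 / k ^ 2 := by
      rw [div_le_div_iff₀ (by positivity) (by positivity)]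
      nlinarith [mul_le_mul_of_nonneg_right hgkR (show (0 : ℝ) ≤ k by linarith)]
    have h2 : (2 : ℝ) / m ≤ 1 / k ^ 2 := by
      rw [div_le_div_iff₀ (by linarith) (by positivity)]
      nlinarith [mul_le_mul_of_nonneg_right hkR (sq_nonneg (k : ℝ))]
    have : (2 : ℝ) / k ^ 2 = 1 / k ^ 2 + 1 / k ^ 2 := by ring
    linarith
  have h10 : 10 * (n : ℝ) / m ≤ 40 / (k : ℝ) ^ 2 * Wel z u := by
    have h1 : (n : ℝ) ≤ 4 * k * Wel z u := by nlinarith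
    have hk0 : (0 : ℝ) < k := by linarith
    rw [div_mul_eq_mul_div, div_le_div_iff₀ (by linarith) (by positivity)]
    calc 10 * (n : ℝ) * k ^ 2 ≤ 10 * (4 * k * Wel z u) * k ^ 2 := by gcongr
      _ = 40 * Wel z u * k ^ 3 := by ring
      _ ≤ 40 * Wel z u * m := by gcongr
  have : 42 / (k : ℝ) ^ 2 * Wel z u = 40 / (k : ℝ) ^ 2 * Wel z u + 2 / (k : ℝ) ^ 2 * Wel z u := by ring
  nlinarith [mul_le_mul_of_nonneg_right hQz2 hW0]

end badprofile

/-- there exist `C > 0` and `M₀` such that for all `m ≥ M₀` and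
all `n ≥ m - 1 + ⌊m^{2/3}⌋`, every ordinal truthful mechanism on tie-free
profiles admits a tie-free profile `u` with
`E[Wel(J(u),u)] ≤ C · m^{-2/3} · Wel(RV(u),u)`. -/
theorem stmt1 :
    ∃ C : ℝ, 0 < C ∧ ∃ M₀ : ℕ,
      ∀ (m : ℕ) (_hM : M₀ ≤ m) (hm2 : 2 ≤ m),
        ∀ n : ℕ, m - 1 + ⌊(m : ℝ) ^ ((2 : ℝ)/3)⌋₊ ≤ n →
          ∀ J : (Fin n → Fin m → ℝ) → Fin m → ℝ,
            MechU J → OrdinalMech J → Truthful J →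
            ∃ u : Fin n → Fin m → ℝ, IsProfileU u ∧
              expWel J u ≤
                C * (m : ℝ) ^ (-(2 : ℝ)/3) * Wel (RV (show 0 < m from by omega) u) u := by
  refine ⟨168, by norm_num, 8, ?_⟩
  intro m hM hm2 n hn J hJ hO hT
  obtain ⟨k, hk, hkm, hkm'⟩ : ∃ k : ℕ, 2 ≤ k ∧ k ^ 3 ≤ m ∧ m < (k + 1) ^ 3 := by
    refine ⟨Nat.findGreatest (fun k => k ^ 3 ≤ m) m, ?_, ?_, ?_⟩
    · exact Nat.le_findGreatest (by omega) (by norm_num; omega)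
    · exact Nat.findGreatest_spec (P := fun k => k ^ 3 ≤ m) (m := 2) (by omega) (by norm_num; omega)
    · by_contra hc
      push Not at hc
      have h1 : Nat.findGreatest (fun k => k ^ 3 ≤ m) m + 1 ≤ m :=
        le_trans (Nat.le_self_pow (by norm_num) _) hc
      have := Nat.le_findGreatest (P := fun k => k ^ 3 ≤ m) h1 hc
      omega
  have hgood : GoodMech (symMech (keyMech J)) :=
    symMech_good (keyMech J) (fun κ hκ => keyMech_dist hm2 hJ hκ)
      (fun κ hκ i ρ hρ A hA => keyMech_truth hm2 hJ hO hT hκ i hρ A hA)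
  obtain ⟨κ, u, z, hκ, hu, hord, hb⟩ := bad_profile hk hkm (by omega) hgood
  obtain ⟨v, hv, hvb⟩ := transfer hm2 hO hκ hu hord z (42 / (k : ℝ) ^ 2) (by positivity) hb
  refine ⟨v, hv, hvb.trans ?_⟩
  have hk0 : (0 : ℝ) < k := by
    have : 0 < k := by omega
    exact_mod_cast this
  have hm0 : (0 : ℝ) < m := by
    have : 0 < m := by omega
    exact_mod_cast this
  apply mul_le_mul_of_nonneg_right
  · have h8 : (m : ℝ) ≤ (2 * k) ^ 3 := by
      have : m ≤ (2 * k) ^ 3 := hkm'.le.trans (Nat.pow_le_pow_left (by omega) 3)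
      exact_mod_cast this
    have h1 : (m : ℝ) ^ ((2 : ℝ) / 3) ≤ 4 * k ^ 2 := by
      calc (m : ℝ) ^ ((2 : ℝ) / 3) ≤ (((2 * k : ℝ)) ^ 3) ^ ((2 : ℝ) / 3) :=
            Real.rpow_le_rpow hm0.le h8 (by norm_num)
        _ = 4 * k ^ 2 := by
            rw [← Real.rpow_natCast, ← Real.rpow_mul (by positivity)]
            norm_num
            ring
    have h2 : (0 : ℝ) < (m : ℝ) ^ ((2 : ℝ) / 3) := Real.rpow_pos_of_pos hm0 _
    rw [show (-(2 : ℝ) / 3) = -((2 : ℝ) / 3) by ring, Real.rpow_neg hm0.le, ← div_eq_mul_inv,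
      div_le_div_iff₀ (by positivity) h2]
    linarith
  · unfold Wel
    exact sum_nonneg fun i _ => ((hv i).1.1 _).1
end

section
/- (Gibbard 1977) Every mechanism on tie-free profiles that is both ordinal and truthful is a convex combination of mechanisms each of which is either (i) unilateral, ordinal and truthful, or (ii) duple and truthful. -/
open Finset

/-- `J` is a convex combination of mechanisms from the family `P`
(as distributions, on tie-free profiles). -/
def ConvexCombOf {n m : ℕ} (J : (Fin n → Fin m → ℝ) → Fin m → ℝ)
    (P : ((Fin n → Fin m → ℝ) → Fin m → ℝ) → Prop) : Prop :=
  ∃ (r : ℕ) (Js : Fin r → (Fin n → Fin m → ℝ) → Fin m → ℝ) (w : Fin r → ℝ),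
    (∀ k, P (Js k)) ∧ (∀ k, 0 ≤ w k) ∧ (∑ k, w k = 1) ∧
    ∀ u, IsProfileU u → ∀ j, J u j = ∑ k, w k * Js k u j

namespace GibbardAux

open Equiv Function

/-- `x` is immediately below `y` in the order `σ` (higher value = more preferred). -/
def Adj {m : ℕ} (σ : Perm (Fin m)) (x y : Fin m) : Prop := (σ y : ℕ) = σ x + 1

lemma Adj.ne {m : ℕ} {σ : Perm (Fin m)} {x y : Fin m} (h : Adj σ x y) : x ≠ y := by
  rintro rfl; unfold Adj at h; omega

lemma Adj.lt {m : ℕ} {σ : Perm (Fin m)} {x y : Fin m} (h : Adj σ x y) : σ x < σ y := by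
  unfold Adj at h; exact Fin.lt_def.2 (by omega)

lemma Adj.swap {m : ℕ} {σ : Perm (Fin m)} {x y : Fin m} (h : Adj σ x y) :
    Adj (σ * Equiv.swap x y) y x := by
  unfold Adj at *; simpa using h

lemma Adj.swap_lt_iff {m : ℕ} {σ : Perm (Fin m)} {z w x y : Fin m} (h : Adj σ z w)
    (hxy : x ≠ y) (hne : ¬ ((z = x ∧ w = y) ∨ (z = y ∧ w = x))) :
    (σ * Equiv.swap z w) x < (σ * Equiv.swap z w) y ↔ σ x < σ y := by
  have hzw := h.ne
  have inj : ∀ a b, a ≠ b → (σ a : ℕ) ≠ σ b :=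
    fun a b hab e => hab (σ.injective (Fin.ext e))
  unfold Adj at h
  simp only [Perm.coe_mul, comp_apply, Fin.lt_def]
  have i1 := inj x z
  have i2 := inj x w
  have i3 := inj y z
  have i4 := inj y w
  by_cases hxz : x = z
  · subst hxz
    have hyw : y ≠ w := fun e => hne (Or.inl ⟨rfl, e.symm⟩)
    have := i3 hxy.symm
    have := i4 hyw
    rw [Equiv.swap_apply_left, Equiv.swap_apply_of_ne_of_ne hxy.symm hyw]
    omega
  by_cases hxw : x = w
  · subst hxw
    have hyz : y ≠ z := fun e => hne (Or.inr ⟨e.symm, rfl⟩)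
    have := i4 hxy.symm
    have := i3 hyz
    rw [Equiv.swap_apply_right, Equiv.swap_apply_of_ne_of_ne hyz hxy.symm]
    omega
  have := i1 hxz
  have := i2 hxw
  rw [Equiv.swap_apply_of_ne_of_ne hxz hxw]
  by_cases hyz : y = z
  · subst hyz
    rw [Equiv.swap_apply_left]; omega
  by_cases hyw : y = w
  · subst hyw
    rw [Equiv.swap_apply_right]; omega
  rw [Equiv.swap_apply_of_ne_of_ne hyz hyw]

/-- Potential used for the sorting induction. -/
def pot {m : ℕ} (τ σ : Perm (Fin m)) : ℕ := ∑ z, (σ z : ℕ) * (τ z : ℕ)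

lemma pot_le {m : ℕ} (τ σ : Perm (Fin m)) : pot τ σ ≤ m * (m * m) := by
  unfold pot
  calc ∑ z, (σ z : ℕ) * (τ z : ℕ) ≤ ∑ _z : Fin m, m * m :=
        Finset.sum_le_sum fun z _ => Nat.mul_le_mul (σ z).2.le (τ z).2.le
    _ = m * (m * m) := by simp

lemma pot_swap {m : ℕ} (τ σ : Perm (Fin m)) {x y : Fin m} (h : Adj σ x y) (hτ : τ y < τ x) :
    pot τ σ < pot τ (σ * Equiv.swap x y) := by
  unfold pot
  have hxy := h.ne
  have hy : y ∈ (Finset.univ.erase x) := by simp [hxy.symm]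
  rw [← Finset.add_sum_erase _ _ (Finset.mem_univ x), ← Finset.add_sum_erase _ _ hy,
    ← Finset.add_sum_erase (a := x) Finset.univ _ (Finset.mem_univ x),
    ← Finset.add_sum_erase (Finset.univ.erase x) _ hy]
  have : ∑ z ∈ (Finset.univ.erase x).erase y, ((σ * Equiv.swap x y) z : ℕ) * (τ z : ℕ)
      = ∑ z ∈ (Finset.univ.erase x).erase y, (σ z : ℕ) * (τ z : ℕ) := by
    refine Finset.sum_congr rfl fun z hz => ?_
    simp only [Finset.mem_erase, Finset.mem_univ, and_true] at hz
    simp [Equiv.swap_apply_of_ne_of_ne hz.2 hz.1]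
  rw [this]
  unfold Adj at h
  have h2 : (τ y : ℕ) < τ x := hτ
  simp only [Perm.coe_mul, comp_apply, Equiv.swap_apply_left, Equiv.swap_apply_right, h]
  nlinarith

lemma exists_descent {m : ℕ} (τ σ : Perm (Fin m)) (h : σ ≠ τ) :
    ∃ x y, Adj σ x y ∧ τ y < τ x := by
  by_contra hcon
  push Not at hcon
  apply h
  obtain _ | m := m
  · ext z; exact z.elim0
  have hmono : StrictMono (fun k => τ (σ.symm k)) := by
    rw [Fin.strictMono_iff_lt_succ]
    intro k
    have h1 := hcon (σ.symm k.castSucc) (σ.symm k.succ) (by simp [Adj])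
    refine lt_of_le_of_ne h1 ?_
    intro h2
    have := σ.symm.injective (τ.injective h2)
    exact absurd this (Fin.castSucc_lt_succ).ne
  have hid : (fun k => τ (σ.symm k)) = id := by
    have h1 : ∀ k, k ≤ τ (σ.symm k) := fun k => hmono.le_apply
    have h2 : ∀ k, τ (σ.symm k) ≤ k := fun k => hmono.apply_le
    funext k; exact le_antisymm (h2 k) (h1 k)
  ext z
  have := congrFun hid (σ z)
  simp at this
  rw [this]

/-- Bubble sort induction. -/
lemma sort_ind {m : ℕ} (τ : Perm (Fin m)) (C : Perm (Fin m) → Prop) (h0 : C τ)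
    (hs : ∀ σ x y, Adj σ x y → τ y < τ x → C (σ * Equiv.swap x y) → C σ) : ∀ σ, C σ := by
  have key : ∀ N : ℕ, ∀ σ, m * (m * m) - pot τ σ ≤ N → C σ := by
    intro N
    induction N with
    | zero =>
      intro σ hσ
      by_cases h : σ = τ
      · rw [h]; exact h0
      obtain ⟨x, y, ha, ht⟩ := exists_descent τ σ h
      have := pot_swap τ σ ha ht
      have := pot_le τ (σ * Equiv.swap x y)
      omega
    | succ N ih =>
      intro σ hσ
      by_cases h : σ = τ
      · rw [h]; exact h0
      obtain ⟨x, y, ha, ht⟩ := exists_descent τ σ h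
      have := pot_swap τ σ ha ht
      have := pot_le τ (σ * Equiv.swap x y)
      exact hs σ x y ha ht (ih _ (by omega))
  exact fun σ => key _ σ le_rfl

/-- A signed indicator. -/
noncomputable def dl {m : ℕ} (x y z : Fin m) : ℝ :=
  (if z = x then 1 else 0) - (if z = y then 1 else 0)

lemma dl_neg {m : ℕ} (x y z : Fin m) : dl y x z = - dl x y z := by unfold dl; ring
lemma dl_left {m : ℕ} {x y : Fin m} (h : x ≠ y) : dl x y x = 1 := by simp [dl, h]
lemma dl_right {m : ℕ} {x y : Fin m} (h : x ≠ y) : dl x y y = -1 := by simp [dl, h.symm]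
lemma dl_other {m : ℕ} {x y z : Fin m} (h : z ≠ x) (hz : z ≠ y) : dl x y z = 0 := by
  simp [dl, h, hz]

/-- Local and monotone. -/
def LocMon {n m : ℕ} (F : (Fin n → Perm (Fin m)) → Fin m → ℝ) : Prop :=
  ∀ P i σ x y, Adj σ x y → ∃ r : ℝ, 0 ≤ r ∧ ∀ z,
    F (update P i (σ * Equiv.swap x y)) z - F (update P i σ) z = r * dl x y z

/-- Effect on `x` of raising `x` over `y` for voter `i`. -/
def eff {n m : ℕ} (F : (Fin n → Perm (Fin m)) → Fin m → ℝ) (i : Fin n) (σ : Perm (Fin m))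
    (x y : Fin m) (P : Fin n → Perm (Fin m)) : ℝ :=
  F (update P i (σ * Equiv.swap x y)) x - F (update P i σ) x

section
variable {n m : ℕ} {F : (Fin n → Perm (Fin m)) → Fin m → ℝ}

lemma LocMon.diff (hF : LocMon F) {σ x y} (h : Adj σ x y) (P i z) :
    F (update P i (σ * Equiv.swap x y)) z - F (update P i σ) z = eff F i σ x y P * dl x y z := by
  obtain ⟨r, -, hz⟩ := hF P i σ x y h
  rw [eff, hz x, hz z, dl_left h.ne, mul_one]

lemma LocMon.eff_nonneg (hF : LocMon F) {σ x y} (h : Adj σ x y) (P i) :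
    0 ≤ eff F i σ x y P := by
  obtain ⟨r, h0, hz⟩ := hF P i σ x y h
  rw [eff, hz x, dl_left h.ne, mul_one]; exact h0

lemma eff_update_self (i : Fin n) (σ : Perm (Fin m)) (x y P τ) :
    eff F i σ x y (update P i τ) = eff F i σ x y P := by
  simp [eff]

lemma LocMon.eff_step (hF : LocMon F) {σ x y} (h : Adj σ x y) (P) {i j : Fin n} (hij : i ≠ j)
    {τ z w} (h' : Adj τ z w) (hne : ¬ ((z = x ∧ w = y) ∨ (z = y ∧ w = x))) :
    eff F i σ x y (update P j (τ * Equiv.swap z w)) = eff F i σ x y (update P j τ) := by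
  have hxy := h.ne
  have hzw := h'.ne
  have c := fun (a b : Perm (Fin m)) => update_comm hij a b P
  by_cases hx : x ≠ z ∧ x ≠ w
  · have h1 := hF.diff h' (update P i (σ * Equiv.swap x y)) j x
    have h2 := hF.diff h' (update P i σ) j x
    rw [dl_other hx.1 hx.2] at h1 h2
    simp only [eff]
    simp only [c] at h1 h2
    linarith
  · have hy : y ≠ z ∧ y ≠ w := by
      constructor
      · rintro rfl; apply hne; right; refine ⟨rfl, ?_⟩
        by_contra hw; exact hx ⟨hxy, fun e => hw e.symm⟩
      · rintro rfl; apply hne; left; refine ⟨?_, rfl⟩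
        by_contra hw; exact hx ⟨fun e => hw e.symm, hxy⟩
    have h1 := hF.diff h' (update P i (σ * Equiv.swap x y)) j y
    have h2 := hF.diff h' (update P i σ) j y
    have h3 := hF.diff h (update P j (τ * Equiv.swap z w)) i y
    have h4 := hF.diff h (update P j τ) i y
    rw [dl_other hy.1 hy.2] at h1 h2
    rw [dl_right hxy] at h3 h4
    simp only [c] at h1 h2
    linarith

lemma LocMon.eff_agree1 (hF : LocMon F) {σ x y} (h : Adj σ x y) (P) {i j : Fin n} (hij : i ≠ j)
    (τ : Perm (Fin m)) : ∀ ρ, (ρ x < ρ y ↔ τ x < τ y) →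
    eff F i σ x y (update P j ρ) = eff F i σ x y (update P j τ) := by
  apply sort_ind τ
  · intro; rfl
  · intro ρ z w hzw hτ ih hag
    have hne : ¬ ((z = x ∧ w = y) ∨ (z = y ∧ w = x)) := by
      rintro (⟨rfl, rfl⟩ | ⟨rfl, rfl⟩)
      · exact absurd (hag.1 hzw.lt) hτ.asymm
      · exact absurd (hag.2 hτ) hzw.lt.asymm
    rw [← hF.eff_step h P hij hzw hne]
    apply ih
    rw [← hag]
    exact hzw.swap_lt_iff h.ne hne

lemma LocMon.eff_agree (hF : LocMon F) {σ x y} (h : Adj σ x y) {i : Fin n} (P Q)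
    (hPQ : ∀ j, j ≠ i → (P j x < P j y ↔ Q j x < Q j y)) :
    eff F i σ x y P = eff F i σ x y Q := by
  have key : ∀ s : Finset (Fin n), eff F i σ x y (s.piecewise P Q) = eff F i σ x y Q := by
    intro s
    induction s using Finset.induction_on with
    | empty => simp
    | insert j s hj ih =>
      rw [Finset.piecewise_insert, ← ih]
      by_cases hij : j = i
      · subst hij; rw [eff_update_self]
      · rw [hF.eff_agree1 h _ (Ne.symm hij) (Q j) (P j) (hPQ j hij)]
        congr 1
        have : Q j = s.piecewise P Q j := by simp [hj]
        rw [this, update_eq_self]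
  have := key Finset.univ
  simpa using this

/-- Key separability. -/
lemma LocMon.eff_key (hF : LocMon F) {σ σ₀ x y} (h : Adj σ x y) (h₀ : Adj σ₀ x y) {i : Fin n}
    (P Q) : eff F i σ x y P - eff F i σ₀ x y P = eff F i σ x y Q - eff F i σ₀ x y Q := by
  set a : Fin n → Perm (Fin m) := fun _ => σ₀ * Equiv.swap x y with ha
  set b : Fin n → Perm (Fin m) := fun _ => σ₀ with hb
  have key : ∀ s : Finset (Fin n), eff F i σ x y (s.piecewise a b) - eff F i σ₀ x y (s.piecewise a b)
      = eff F i σ x y b - eff F i σ₀ x y b := by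
    intro s
    induction s using Finset.induction_on with
    | empty => simp
    | insert j s hj ih =>
      rw [Finset.piecewise_insert, ← ih]
      by_cases hij : i = j
      · subst hij; rw [eff_update_self, eff_update_self]
      set R := s.piecewise a b with hR
      have hRj : R = update R j σ₀ := by
        have : σ₀ = R j := by simp [hR, hj, hb]
        rw [this, update_eq_self]
      have e1 : eff F j σ₀ x y (update R i (σ * Equiv.swap x y))
          = eff F j σ₀ x y (update R i (σ₀ * Equiv.swap x y)) := by
        apply hF.eff_agree h₀
        intro k _
        by_cases hk : k = i
        · subst hk
          simp [h.lt.asymm, h₀.lt.asymm]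
        · simp [hk]
      have e2 : eff F j σ₀ x y (update R i σ) = eff F j σ₀ x y (update R i σ₀) := by
        apply hF.eff_agree h₀
        intro k _
        by_cases hk : k = i
        · subst hk
          simp [h.lt, h₀.lt]
        · simp [hk]
      have c := fun (a b : Perm (Fin m)) => update_comm hij a b R
      have e3 : eff F i σ x y R = eff F i σ x y (update R j σ₀) := by rw [← hRj]
      have e4 : eff F i σ₀ x y R = eff F i σ₀ x y (update R j σ₀) := by rw [← hRj]
      rw [e3, e4]
      simp only [eff, c] at e1 e2
      simp only [eff, ha]
      linarith
  have main : ∀ P : Fin n → Perm (Fin m), eff F i σ x y P - eff F i σ₀ x y P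
      = eff F i σ x y b - eff F i σ₀ x y b := by
    intro P
    rw [← key (Finset.univ.filter fun j => P j y < P j x)]
    have hag : ∀ j, j ≠ i → (P j x < P j y ↔
      (Finset.univ.filter fun j => P j y < P j x).piecewise a b j x <
      (Finset.univ.filter fun j => P j y < P j x).piecewise a b j y) := by
      intro j _
      by_cases hj : P j y < P j x
      · simp [Finset.piecewise, hj, ha, hj.asymm, h₀.lt.asymm]
      · have : P j x < P j y := lt_of_le_of_ne (not_lt.1 hj)
          (fun e => h.ne ((P j).injective e))
        simp [Finset.piecewise, hj, hb, h₀.lt, this]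
    rw [hF.eff_agree h _ _ hag, hF.eff_agree h₀ _ _ hag]
  rw [main P, main Q]

end

lemma exists_adj {m : ℕ} {x y : Fin m} (hxy : x ≠ y) : ∃ σ : Perm (Fin m), Adj σ x y := by
  have hm : 2 ≤ m := by
    have := x.2; have := y.2
    have : (x : ℕ) ≠ y := fun e => hxy (Fin.ext e)
    omega
  let o : Fin m := ⟨0, by omega⟩
  let l : Fin m := ⟨1, by omega⟩
  have hol : o ≠ l := by simp [o, l]
  have hy : Equiv.swap x o y ≠ o := by
    intro e
    have : Equiv.swap x o y = Equiv.swap x o x := by rw [e, Equiv.swap_apply_left]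
    exact hxy ((Equiv.swap x o).injective this).symm
  refine ⟨Equiv.swap (Equiv.swap x o y) l * Equiv.swap x o, ?_⟩
  simp only [Adj, Perm.coe_mul, comp_apply, Equiv.swap_apply_left]
  rw [Equiv.swap_apply_of_ne_of_ne hy.symm hol]

/-- Voters preferring `x` to `y`. -/
def TT {n m : ℕ} (x y : Fin m) (P : Fin n → Perm (Fin m)) : Finset (Fin n) :=
  Finset.univ.filter fun i => P i y < P i x

section
variable {n m : ℕ} {F : (Fin n → Perm (Fin m)) → Fin m → ℝ}

lemma LocMon.pair (hF : LocMon F) {x y : Fin m} (hxy : x ≠ y) :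
    ∃ D : Finset (Fin n) → ℝ, D ∅ = 0 ∧ (∀ i T, i ∉ T → D T ≤ D (insert i T)) ∧
      ∀ i σ, Adj σ x y → ∃ r : ℝ, 0 ≤ r ∧ ∀ P T, i ∉ T → (∀ j, j ≠ i → (j ∈ T ↔ P j y < P j x)) →
        eff F i σ x y P - (D (insert i T) - D T) = r := by
  obtain ⟨b, hb⟩ := exists_adj hxy
  have hQ : ∀ i, ∃ Q, ∀ P, eff F i b x y Q ≤ eff F i b x y P := fun i =>
    Finite.exists_min (fun P => eff F i b x y P)
  choose Q hQ using hQ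
  set pb : Fin n → Perm (Fin m) := fun _ => b with hpb
  set pa : Fin n → Perm (Fin m) := fun _ => b * Equiv.swap x y with hpa
  set D : Finset (Fin n) → ℝ := fun T => F (T.piecewise pa pb) x - F pb x
    - ∑ i ∈ T, eff F i b x y (Q i) with hD
  have hins : ∀ i T, i ∉ T → D (insert i T) - D T
      = eff F i b x y (T.piecewise pa pb) - eff F i b x y (Q i) := by
    intro i T hi
    simp only [hD]
    rw [Finset.sum_insert hi, Finset.piecewise_insert]
    have : T.piecewise pa pb = update (T.piecewise pa pb) i b := by
      have : b = T.piecewise pa pb i := by simp [hi, hpb]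
      conv_rhs => rw [this]
      rw [update_eq_self]
    have h2 : F (T.piecewise pa pb) x = F (update (T.piecewise pa pb) i b) x := by rw [← this]
    rw [h2]
    simp only [eff, hpa]
    ring
  refine ⟨D, by simp [hD], ?_, ?_⟩
  · intro i T hi
    have := hins i T hi
    have := hQ i (T.piecewise pa pb)
    linarith
  · intro i σ hσ
    refine ⟨eff F i σ x y (Q i), hF.eff_nonneg hσ _ _, ?_⟩
    intro P T hi hT
    rw [hins i T hi]
    have h1 : eff F i b x y (T.piecewise pa pb) = eff F i b x y P := by
      apply hF.eff_agree hb
      intro j hj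
      by_cases hjT : j ∈ T
      · have := (hT j hj).1 hjT
        simp [hjT, hpa, hb.lt.asymm, this.asymm]
      · have h3 := fun h => hjT ((hT j hj).2 h)
        have : P j x < P j y := lt_of_le_of_ne (not_lt.1 h3)
          (fun e => hxy ((P j).injective e))
        simp [hjT, hpb, hb.lt, this]
    have := hF.eff_key hσ hb (i := i) P (Q i)
    linarith

/-- The (unnormalized) duple part attached to a pair of candidates. -/
noncomputable def GG (D : Fin m → Fin m → Finset (Fin n) → ℝ) (p : Fin m × Fin m)
    (T : Finset (Fin n)) (z : Fin m) : ℝ :=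
  if p.1 < p.2 then
    (if z = p.2 then D p.1 p.2 Finset.univ else 0) + D p.1 p.2 T * dl p.1 p.2 z
  else 0

lemma TT_swap_eq {σ : Perm (Fin m)} {x y : Fin m} (h : Adj σ x y) {p q : Fin m} (hpq : p ≠ q)
    (hne : ¬ ((x = p ∧ y = q) ∨ (x = q ∧ y = p))) (P : Fin n → Perm (Fin m)) (i : Fin n) :
    TT p q (update P i (σ * Equiv.swap x y)) = TT p q (update P i σ) := by
  ext j
  simp only [TT, Finset.mem_filter, Finset.mem_univ, true_and]
  by_cases hj : j = i
  · subst hj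
    simp only [update_self]
    exact h.swap_lt_iff hpq.symm (fun h => hne h.symm)
  · simp [hj]

/-- Single-voter version of local monotonicity. -/
def LocMon1 (U : Perm (Fin m) → Fin m → ℝ) : Prop :=
  ∀ σ x y, Adj σ x y → ∃ r : ℝ, 0 ≤ r ∧ ∀ z, U (σ * Equiv.swap x y) z - U σ z = r * dl x y z

lemma LocMon.residual (hF : LocMon F) :
    ∃ D : Fin m → Fin m → Finset (Fin n) → ℝ,
      (∀ x y, x < y → D x y ∅ = 0 ∧ (∀ i T, i ∉ T → D x y T ≤ D x y (insert i T))) ∧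
      ∀ i σ x y, Adj σ x y → ∃ r : ℝ, 0 ≤ r ∧ ∀ P z,
        (F (update P i (σ * Equiv.swap x y)) z
          - ∑ p : Fin m × Fin m, GG D p (TT p.1 p.2 (update P i (σ * Equiv.swap x y))) z)
        - (F (update P i σ) z - ∑ p : Fin m × Fin m, GG D p (TT p.1 p.2 (update P i σ)) z)
        = r * dl x y z := by
  have hD : ∀ x y : Fin m, ∃ D : Finset (Fin n) → ℝ, x ≠ y →
      D ∅ = 0 ∧ (∀ i T, i ∉ T → D T ≤ D (insert i T)) ∧
      ∀ i σ, Adj σ x y → ∃ r : ℝ, 0 ≤ r ∧ ∀ P T, i ∉ T → (∀ j, j ≠ i → (j ∈ T ↔ P j y < P j x)) →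
        eff F i σ x y P - (D (insert i T) - D T) = r := by
    intro x y
    by_cases hxy : x = y
    · exact ⟨fun _ => 0, fun h => absurd hxy h⟩
    · obtain ⟨D, h⟩ := hF.pair hxy
      exact ⟨D, fun _ => h⟩
  choose D hD using hD
  refine ⟨D, fun x y h => ⟨(hD x y h.ne).1, (hD x y h.ne).2.1⟩, ?_⟩
  have main : ∀ i σ x y, Adj σ x y → x < y → ∃ r : ℝ, 0 ≤ r ∧ ∀ P z,
        (F (update P i (σ * Equiv.swap x y)) z
          - ∑ p : Fin m × Fin m, GG D p (TT p.1 p.2 (update P i (σ * Equiv.swap x y))) z)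
        - (F (update P i σ) z - ∑ p : Fin m × Fin m, GG D p (TT p.1 p.2 (update P i σ)) z)
        = r * dl x y z := by
    intro i σ x y h hlt
    obtain ⟨r, hr, hP⟩ := (hD x y hlt.ne).2.2 i σ h
    refine ⟨r, hr, fun P z => ?_⟩
    have hi : i ∉ TT x y (update P i σ) := by
      simp [TT, h.lt.le]
    have e1 := hP P (TT x y (update P i σ)) hi (by
      intro j hj; simp [TT, hj])
    have hT : TT x y (update P i (σ * Equiv.swap x y)) = insert i (TT x y (update P i σ)) := by
      ext j
      by_cases hj : j = i
      · subst hj; simp [TT, h.lt]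
      · simp [TT, hj]
    have e2 := hF.diff h P i z
    have e3 : ∑ p : Fin m × Fin m, GG D p (TT p.1 p.2 (update P i (σ * Equiv.swap x y))) z
        - ∑ p : Fin m × Fin m, GG D p (TT p.1 p.2 (update P i σ)) z
        = (D x y (insert i (TT x y (update P i σ))) - D x y (TT x y (update P i σ)))
          * dl x y z := by
      rw [← Finset.sum_sub_distrib, Finset.sum_eq_single (x, y)]
      · simp only [GG, if_pos hlt, hT]; ring
      · rintro ⟨p, q⟩ - hne
        by_cases hpq : p < q
        · rw [TT_swap_eq h hpq.ne]
          · simp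
          · rintro (⟨rfl, rfl⟩ | ⟨rfl, rfl⟩)
            · exact hne rfl
            · exact absurd hpq hlt.asymm
        · simp [GG, hpq]
      · simp
    rw [← e1]
    linear_combination e2 - e3
  intro i σ x y h
  rcases lt_or_gt_of_ne h.ne with hlt | hlt
  · exact main i σ x y h hlt
  · obtain ⟨r, hr, hz⟩ := main i _ y x h.swap hlt
    refine ⟨r, hr, fun P z => ?_⟩
    have := hz P z
    have hs : σ * Equiv.swap x y * Equiv.swap y x = σ := by
      rw [Equiv.swap_comm y x, mul_assoc, Equiv.swap_mul_self, mul_one]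
    rw [hs, dl_neg] at this
    linarith

lemma LocMon1.sum_eq {U : Perm (Fin m) → Fin m → ℝ} (hU : LocMon1 U) (τ σ : Perm (Fin m)) :
    ∑ z, U σ z = ∑ z, U τ z := by
  revert σ
  apply sort_ind τ
  · rfl
  · intro σ x y h _ ih
    rw [← ih]
    obtain ⟨r, -, hr⟩ := hU σ x y h
    have : ∑ z, (U (σ * Equiv.swap x y) z - U σ z) = 0 := by
      simp [hr, ← Finset.mul_sum, dl, Finset.sum_sub_distrib]
    rw [Finset.sum_sub_distrib] at this
    linarith

lemma LocMon1.bottom {U : Perm (Fin m) → Fin m → ℝ} (hU : LocMon1 U) (τ : Perm (Fin m))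
    (x : Fin m) (hx : (τ x : ℕ) = 0) (σ : Perm (Fin m)) : U τ x ≤ U σ x := by
  revert σ
  apply sort_ind τ
  · rfl
  · intro σ z w h ht ih
    obtain ⟨r, hr0, hr⟩ := hU σ z w h
    have h1 := hr x
    have hxz : x ≠ z := by
      rintro rfl
      have : (τ w : ℕ) < τ x := ht
      omega
    have : dl z w x ≤ 0 := by
      unfold dl; simp only [hxz, if_false]; split_ifs <;> norm_num
    nlinarith [mul_nonneg hr0 (neg_nonneg.2 this)]

/-- Sorted is better: truthfulness of local monotone single-voter schemes. -/
lemma LocMon1.truthful {U : Perm (Fin m) → Fin m → ℝ} (hU : LocMon1 U) (τ : Perm (Fin m))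
    (v : Fin m → ℝ) (hv : ∀ x y, v x < v y ↔ τ x < τ y) (σ : Perm (Fin m)) :
    ∑ j, U σ j * v j ≤ ∑ j, U τ j * v j := by
  revert σ
  apply sort_ind τ
  · rfl
  · intro σ x y h ht ih
    refine le_trans ?_ ih
    obtain ⟨r, hr0, hr⟩ := hU σ x y h
    have : ∑ j, U (σ * Equiv.swap x y) j * v j - ∑ j, U σ j * v j = r * (v x - v y) := by
      rw [← Finset.sum_sub_distrib]
      simp only [← sub_mul, hr, dl]
      simp [mul_assoc, sub_mul, ← Finset.mul_sum, Finset.sum_sub_distrib]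
    have h2 := (hv y x).2 ht
    nlinarith [mul_nonneg hr0 (sub_nonneg.2 h2.le)]

lemma LocMon.decomp (hm : 0 < m) (hF : LocMon F) (h0 : ∀ P z, 0 ≤ F P z) :
    ∃ (D : Fin m → Fin m → Finset (Fin n) → ℝ) (U : Fin n → Perm (Fin m) → Fin m → ℝ)
      (c : Fin m → ℝ),
      (∀ x y, x < y → D x y ∅ = 0 ∧ (∀ i T, i ∉ T → D x y T ≤ D x y (insert i T))) ∧
      (∀ i, LocMon1 (U i)) ∧ (∀ i σ z, 0 ≤ U i σ z) ∧ (∀ z, 0 ≤ c z) ∧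
      ∀ P z, F P z = c z + ∑ i, U i (P i) z
        + ∑ p : Fin m × Fin m, GG D p (TT p.1 p.2 P) z := by
  obtain ⟨D, hD, hR⟩ := hF.residual
  set R : (Fin n → Perm (Fin m)) → Fin m → ℝ := fun P z =>
    F P z - ∑ p : Fin m × Fin m, GG D p (TT p.1 p.2 P) z with hRdef
  have hR' : ∀ i σ x y, Adj σ x y → ∃ r : ℝ, 0 ≤ r ∧ ∀ P z,
    R (update P i (σ * Equiv.swap x y)) z - R (update P i σ) z = r * dl x y z := hR
  have hsep : ∀ i P Q z τ σ, R (update P i σ) z - R (update P i τ) z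
      = R (update Q i σ) z - R (update Q i τ) z := by
    intro i P Q z τ
    apply sort_ind τ
    · simp
    · intro σ x y h _ ih
      obtain ⟨r, -, hr⟩ := hR' i σ x y h
      have := hr P z
      have := hr Q z
      linarith
  let o : Fin m := ⟨0, hm⟩
  let β : Fin m → Perm (Fin m) := fun x => Equiv.swap x o
  have hβ : ∀ x, ((β x) x : ℕ) = 0 := by intro x; simp [β, o]
  let P0 : Fin n → Perm (Fin m) := fun _ => 1
  let V : Fin n → Perm (Fin m) → Fin m → ℝ := fun i σ z => R (update P0 i σ) z
  have hV : ∀ i, LocMon1 (V i) := by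
    intro i σ x y h
    obtain ⟨r, h0, hr⟩ := hR' i σ x y h
    exact ⟨r, h0, fun z => hr P0 z⟩
  have hsum : ∀ P z, R P z - R (fun _ => β z) z = ∑ i, (V i (P i) z - V i (β z) z) := by
    intro P z
    have key : ∀ s : Finset (Fin n), R (s.piecewise P (fun _ => β z)) z - R (fun _ => β z) z
        = ∑ i ∈ s, (V i (P i) z - V i (β z) z) := by
      intro s
      induction s using Finset.induction_on with
      | empty => simp
      | insert j s hj ih =>
        rw [Finset.sum_insert hj, Finset.piecewise_insert, ← ih]
        have := hsep j (s.piecewise P (fun _ => β z)) P0 z (β z) (P j)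
        have h2 : update (s.piecewise P (fun _ => β z)) j (β z)
            = s.piecewise P (fun _ => β z) := by
          rw [update_eq_self_iff]; simp [hj]
        rw [h2] at this
        simp only [V]
        linarith
    simpa using key Finset.univ
  refine ⟨D, fun i σ z => V i σ z - V i (β z) z, fun z => F (fun _ => β z) z, hD, ?_, ?_,
    fun z => h0 _ _, ?_⟩
  · intro i σ x y h
    obtain ⟨r, hr0, hr⟩ := hV i σ x y h
    exact ⟨r, hr0, fun z => by rw [← hr z]; ring⟩
  · intro i σ z
    exact sub_nonneg.2 ((hV i).bottom (β z) z (hβ z) σ)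
  · intro P z
    have h1 := hsum P z
    have h2 : ∑ p : Fin m × Fin m, GG D p (TT p.1 p.2 (fun _ : Fin n => β z)) z = 0 := by
      apply Finset.sum_eq_zero
      rintro ⟨p, q⟩ -
      unfold GG
      split_ifs with hpq hz
      · have hz' : z = q := hz
        subst hz'
        have hpz : p ≠ z := (show p < z from hpq).ne
        have : TT p z (fun _ : Fin n => β z) = Finset.univ := by
          ext i
          simp only [TT, Finset.mem_filter, Finset.mem_univ, true_and, iff_true, Fin.lt_def, hβ]
          refine Nat.pos_of_ne_zero fun e => ?_
          rw [← hβ z] at e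
          exact hpz ((β z).injective (Fin.ext e))
        simp only [this]
        rw [dl_right hpz]; ring
      · by_cases hz2 : z = p
        · subst hz2
          have : TT z q (fun _ : Fin n => β z) = ∅ := by
            ext i
            simp [TT, Fin.lt_def, hβ]
          simp only [this]
          rw [(hD _ _ hpq).1]; ring
        · rw [dl_other hz2 hz]; ring
      · rfl
    simp only [hRdef, h2] at h1
    linarith

end

/-- The order of a utility function. -/
noncomputable def rk {m : ℕ} (u : Fin m → ℝ) : Perm (Fin m) := (Tuple.sort u)⁻¹

lemma rk_lt {m : ℕ} {u : Fin m → ℝ} (hu : Injective u) (x y : Fin m) :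
    u x < u y ↔ rk u x < rk u y := by
  have h : StrictMono (u ∘ Tuple.sort u) :=
    (Tuple.monotone_sort u).strictMono_of_injective (hu.comp (Tuple.sort u).injective)
  have := h.lt_iff_lt (a := rk u x) (b := rk u y)
  rw [← this]
  simp [rk]

/-- A utility function with given order. -/
noncomputable def ut {m : ℕ} (σ : Perm (Fin m)) : Fin m → ℝ := fun j => (σ j : ℝ) / ((m : ℝ) - 1)

lemma ut_lt {m : ℕ} (hm : 2 ≤ m) (σ : Perm (Fin m)) (x y : Fin m) :
    ut σ x < ut σ y ↔ σ x < σ y := by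
  have : (2 : ℝ) ≤ m := by exact_mod_cast hm
  unfold ut
  rw [div_lt_div_iff_of_pos_right (by linarith)]
  exact Nat.cast_lt

lemma inj_of_lt {m : ℕ} {v : Fin m → ℝ} {σ : Perm (Fin m)}
    (h : ∀ x y, v x < v y ↔ σ x < σ y) : Injective v := by
  intro x y e
  by_contra hne
  rcases lt_or_gt_of_ne (fun e => hne (σ.injective e)) with h1 | h1
  · exact absurd e ((h x y).2 h1).ne
  · exact absurd e (ne_of_gt ((h y x).2 h1))

/-- Step-like utility functions approximating indicators of upper sets. -/
noncomputable def stp {m : ℕ} (σ : Perm (Fin m)) (t : ℕ) (ε : ℝ) : Fin m → ℝ := fun j =>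
  (1 - ε) * (if t ≤ (σ j : ℕ) then 1 else 0) + ε * ut σ j

lemma stp_lt {m : ℕ} (hm : 2 ≤ m) (σ : Perm (Fin m)) (t : ℕ) {ε : ℝ} (h0 : 0 < ε) (h1 : ε ≤ 1)
    (x y : Fin m) : stp σ t ε x < stp σ t ε y ↔ σ x < σ y := by
  have key : ∀ x y, σ x < σ y → stp σ t ε x < stp σ t ε y := by
    intro x y h
    have h2 := (ut_lt hm σ x y).2 h
    have h3 : (σ x : ℕ) < σ y := h
    unfold stp
    have h4 : ε * ut σ x < ε * ut σ y := mul_lt_mul_of_pos_left h2 h0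
    have h5 : (1 - ε) * (if t ≤ (σ x : ℕ) then (1 : ℝ) else 0)
        ≤ (1 - ε) * (if t ≤ (σ y : ℕ) then (1 : ℝ) else 0) := by
      apply mul_le_mul_of_nonneg_left _ (by linarith)
      split_ifs <;> first | omega | norm_num
    linarith
  refine ⟨fun h => ?_, key x y⟩
  by_contra hne
  rcases (not_lt.1 hne).lt_or_eq with h' | h'
  · exact absurd (key _ _ h') h.asymm
  · have := σ.injective h'
    subst this
    exact lt_irrefl _ h

lemma stp_pref {m : ℕ} (hm : 2 ≤ m) (σ : Perm (Fin m)) {t : ℕ} (ht : 1 ≤ t) (htm : t < m)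
    {ε : ℝ} (h0 : 0 < ε) (h1 : ε ≤ 1) : IsPrefU (stp σ t ε) := by
  have hmr : (2 : ℝ) ≤ m := by exact_mod_cast hm
  refine ⟨⟨fun j => ?_, ⟨σ.symm ⟨0, by omega⟩, ?_⟩, ⟨σ.symm ⟨m - 1, by omega⟩, ?_⟩⟩,
    inj_of_lt (stp_lt hm σ t h0 h1)⟩
  · have hu0 : 0 ≤ ut σ j := div_nonneg (by positivity) (by linarith)
    have hu1 : ut σ j ≤ 1 := by
      unfold ut
      rw [div_le_one (by linarith)]
      have : ((σ j : ℕ) : ℝ) + 1 ≤ m := by exact_mod_cast (σ j).2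
      linarith
    unfold stp
    split_ifs
    · constructor <;> nlinarith
    · constructor <;> nlinarith
  · have : ¬ t ≤ 0 := by omega
    simp [stp, ut, this]
  · have : t ≤ m - 1 := by omega
    have h2 : ((m - 1 : ℕ) : ℝ) = (m : ℝ) - 1 := by
      rw [Nat.cast_sub (by omega)]; simp
    have h3 : (m : ℝ) - 1 ≠ 0 := by linarith
    simp [stp, ut, this, h2, h3]

lemma upper_le {m : ℕ} (hm : 2 ≤ m) (σ : Perm (Fin m)) (d : Fin m → ℝ) (hd : ∑ z, d z = 0)
    (h : ∀ v, IsPrefU v → (∀ x y, v x < v y ↔ σ x < σ y) → ∑ z, d z * v z ≤ 0) (t : ℕ) :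
    ∑ z, d z * (if t ≤ (σ z : ℕ) then 1 else 0) ≤ 0 := by
  by_cases h1 : 1 ≤ t
  swap
  · have : t = 0 := by omega
    subst this; simp [hd]
  by_cases h2 : t < m
  swap
  · have : ∀ z, ¬ t ≤ (σ z : ℕ) := fun z => by have := (σ z).2; omega
    simp [this]
  set A := ∑ z, d z * (if t ≤ (σ z : ℕ) then (1 : ℝ) else 0) with hA
  set B := ∑ z, d z * ut σ z with hB
  have key : ∀ ε : ℝ, 0 < ε → ε ≤ 1 → (1 - ε) * A + ε * B ≤ 0 := by
    intro ε e0 e1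
    have := h _ (stp_pref hm σ h1 h2 e0 e1) (stp_lt hm σ t e0 e1)
    refine le_trans (le_of_eq ?_) this
    rw [hA, hB, Finset.mul_sum, Finset.mul_sum, ← Finset.sum_add_distrib]
    refine Finset.sum_congr rfl fun z _ => ?_
    unfold stp; ring
  by_contra hcon
  push Not at hcon
  have hs : 0 < A + |B| := by positivity
  have hε0 : 0 < A / (2 * (A + |B|)) := by positivity
  have hε1 : A / (2 * (A + |B|)) ≤ 1 := by
    rw [div_le_one (by positivity)]
    have := abs_nonneg B
    linarith
  have h3 := key _ hε0 hε1
  have h4 : A / (2 * (A + |B|)) * (A + |B|) = A / 2 := by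
    field_simp
  have h5 := neg_abs_le B
  nlinarith [mul_le_mul_of_nonneg_left h5 hε0.le]

/-- The mechanism on orders. -/
noncomputable def toF {n m : ℕ} (J : (Fin n → Fin m → ℝ) → Fin m → ℝ)
    (P : Fin n → Perm (Fin m)) : Fin m → ℝ := J (fun i => ut (P i))

section
variable {n m : ℕ} {J : (Fin n → Fin m → ℝ) → Fin m → ℝ}

lemma ut_pref (hm : 2 ≤ m) (σ : Perm (Fin m)) : IsPrefU (ut σ) := by
  have := stp_pref hm σ (t := 1) le_rfl (by omega) (ε := 1) one_pos le_rfl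
  have h : stp σ 1 1 = ut σ := by funext j; simp [stp]
  rwa [h] at this

lemma toF_eq (hm : 2 ≤ m) (hOrd : OrdinalMech J) {u : Fin n → Fin m → ℝ} (hu : IsProfileU u)
    {P : Fin n → Perm (Fin m)} (h : ∀ i x y, u i x < u i y ↔ P i x < P i y) : J u = toF J P := by
  apply hOrd _ _ hu (fun i => ut_pref hm _)
  intro i x y
  rw [h, ut_lt hm]

lemma toF_truth (hm : 2 ≤ m) (hOrd : OrdinalMech J) (hT : Truthful J)
    (P : Fin n → Perm (Fin m)) (i : Fin n) (σ τ : Perm (Fin m)) (v : Fin m → ℝ) (hv : IsPrefU v)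
    (hvσ : ∀ x y, v x < v y ↔ σ x < σ y) :
    ∑ j, toF J (update P i τ) j * v j ≤ ∑ j, toF J (update P i σ) j * v j := by
  have hu : IsProfileU (update (fun i => ut (P i)) i v) := by
    intro k
    by_cases hk : k = i
    · subst hk; simpa using hv
    · simpa [hk] using ut_pref hm _
  have hu' : IsProfileU (update (fun i => ut (P i)) i (ut τ)) := by
    intro k
    by_cases hk : k = i
    · subst hk; simpa using ut_pref hm _
    · simpa [hk] using ut_pref hm _
  have h := hT _ hu i (ut τ) (ut_pref hm τ)
  rw [update_idem] at h
  rw [toF_eq hm hOrd hu (P := update P i σ), toF_eq hm hOrd hu' (P := update P i τ)] at h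
  · simpa using h
  · intro k x y
    by_cases hk : k = i
    · subst hk; simpa using ut_lt hm _ _ _
    · simpa [hk] using ut_lt hm _ _ _
  · intro k x y
    by_cases hk : k = i
    · subst hk; simpa using hvσ _ _
    · simpa [hk] using ut_lt hm _ _ _

lemma toF_locMon (hm : 2 ≤ m) (hJ : MechU J) (hOrd : OrdinalMech J) (hT : Truthful J) :
    LocMon (toF J) := by
  intro P i σ x y h
  set σ' := σ * Equiv.swap x y with hσ'
  set d : Fin m → ℝ := fun z => toF J (update P i σ') z - toF J (update P i σ) z with hd
  have hsum : ∑ z, d z = 0 := by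
    simp only [hd, Finset.sum_sub_distrib]
    have : ∀ P, ∑ z, toF J P z = 1 := fun P => (hJ _ (fun i => ut_pref hm _)).2
    simp [this]
  have hA := upper_le hm σ d hsum (by
    intro v hv hvσ
    have := toF_truth hm hOrd hT P i σ σ' v hv hvσ
    simp only [hd, sub_mul, Finset.sum_sub_distrib]
    linarith)
  have hA' := upper_le hm σ' (fun z => - d z) (by simp [hsum]) (by
    intro v hv hvσ
    have := toF_truth hm hOrd hT P i σ' σ v hv hvσ
    simp only [hd, sub_mul, neg_mul, Finset.sum_neg_distrib, Finset.sum_sub_distrib]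
    linarith)
  simp only [neg_mul, Finset.sum_neg_distrib] at hA'
  have hxy := h.ne
  have hs1 : σ' x = σ y := by simp [hσ']
  have hs2 : σ' y = σ x := by simp [hσ']
  have hs3 : ∀ z, z ≠ x → z ≠ y → σ' z = σ z := by
    intro z h1 h2; simp [hσ', Equiv.swap_apply_of_ne_of_ne h1 h2]
  unfold Adj at h
  have hind : ∀ t : ℕ, t ≠ σ x + 1 → ∀ z, (t ≤ (σ' z : ℕ) ↔ t ≤ (σ z : ℕ)) := by
    intro t ht z
    by_cases hzx : z = x
    · subst hzx; rw [hs1, h]; omega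
    by_cases hzy : z = y
    · subst hzy; rw [hs2, h]; omega
    rw [hs3 z hzx hzy]
  have hzero : ∀ t : ℕ, t ≠ σ x + 1 → ∑ z, d z * (if t ≤ (σ z : ℕ) then 1 else 0) = 0 := by
    intro t ht
    have h1 := hA t
    have h2 := hA' t
    simp only [hind t ht] at h2
    linarith
  have hstep : ∀ (ρ : Perm (Fin m)) z, d z = ∑ w, d w * (if (ρ z : ℕ) ≤ (ρ w : ℕ) then 1 else 0)
      - ∑ w, d w * (if (ρ z : ℕ) + 1 ≤ (ρ w : ℕ) then 1 else 0) := by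
    intro ρ z
    rw [← Finset.sum_sub_distrib, Finset.sum_eq_single z]
    · simp
    · intro w _ hw
      have : (ρ z : ℕ) ≠ ρ w := fun e => hw (ρ.injective (Fin.ext e)).symm
      by_cases h1 : (ρ z : ℕ) ≤ ρ w
      · have : (ρ z : ℕ) + 1 ≤ ρ w := by omega
        simp only [h1, this, if_true, sub_self]
      · have : ¬ (ρ z : ℕ) + 1 ≤ ρ w := by omega
        simp only [h1, this, if_false, sub_self]
    · simp
  have hother : ∀ z, z ≠ x → z ≠ y → d z = 0 := by
    intro z hzx hzy
    have n1 : (σ z : ℕ) ≠ σ x := fun e => hzx (σ.injective (Fin.ext e))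
    have n2 : (σ z : ℕ) ≠ σ y := fun e => hzy (σ.injective (Fin.ext e))
    rw [hstep σ z, hzero _ (by omega), hzero _ (by omega), sub_self]
  have hx1 := hstep σ x
  have hy1 := hstep σ y
  rw [hzero (σ x) (by omega)] at hx1
  rw [h, hzero (σ x + 1 + 1) (by omega)] at hy1
  have hA1 := hA (σ x + 1)
  refine ⟨d x, by linarith, ?_⟩
  intro z
  change d z = _
  by_cases hzx : z = x
  · subst hzx; rw [dl_left hxy, mul_one]
  by_cases hzy : z = y
  · subst hzy; rw [dl_right hxy]; linarith
  rw [hother z hzx hzy, dl_other hzx hzy, mul_zero]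

end

/-- The target class of mechanisms. -/
def Good {n m : ℕ} (K : (Fin n → Fin m → ℝ) → Fin m → ℝ) : Prop :=
  (Unilateral K ∧ OrdinalMech K ∧ Truthful K) ∨ (Duple K ∧ Truthful K)

lemma Truthful.smul {n m : ℕ} {K : (Fin n → Fin m → ℝ) → Fin m → ℝ} (h : Truthful K) {a : ℝ}
    (ha : 0 ≤ a) : Truthful (fun u j => a * K u j) := by
  intro u hu i v hv
  simp only [mul_assoc, ← Finset.mul_sum]
  exact mul_le_mul_of_nonneg_left (h u hu i v hv) ha

lemma Good.smul {n m : ℕ} {K : (Fin n → Fin m → ℝ) → Fin m → ℝ} (h : Good K) {a : ℝ}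
    (ha : 0 ≤ a) : Good (fun u j => a * K u j) := by
  rcases h with ⟨⟨i, h1⟩, h2, h3⟩ | ⟨⟨x, y, hxy, h1⟩, h2⟩
  · left
    refine ⟨⟨i, fun u u' hu hu' e => ?_⟩, fun u u' hu hu' e => ?_, Truthful.smul h3 ha⟩
    · simp only [h1 u u' hu hu' e]
    · simp only [h2 u u' hu hu' e]
  · right
    refine ⟨⟨x, y, hxy, fun u hu j hx hy => ?_⟩, Truthful.smul h2 ha⟩
    simp only [h1 u hu j hx hy, mul_zero]

lemma good_const {n m : ℕ} (hn : 1 ≤ n) (c : Fin m → ℝ) :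
    Good (fun (_ : Fin n → Fin m → ℝ) => c) := by
  left
  exact ⟨⟨⟨0, hn⟩, fun _ _ _ _ _ => rfl⟩, fun _ _ _ _ _ => rfl, fun _ _ _ _ _ => le_rfl⟩

lemma good_normalize {n m : ℕ} (hn : 1 ≤ n) (hm : 2 ≤ m) {K : (Fin n → Fin m → ℝ) → Fin m → ℝ}
    (hK : Good K) (h0 : ∀ u, IsProfileU u → ∀ j, 0 ≤ K u j) (w : ℝ)
    (hw : ∀ u, IsProfileU u → ∑ j, K u j = w) :
    ∃ K' : (Fin n → Fin m → ℝ) → Fin m → ℝ, (MechU K' ∧ Good K') ∧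
      ∀ u, IsProfileU u → ∀ j, K u j = w * K' u j := by
  by_cases hw0 : w = 0
  · refine ⟨fun _ => fun j => if j = ⟨0, by omega⟩ then 1 else 0, ⟨?_, good_const hn _⟩, ?_⟩
    · intro u hu
      refine ⟨fun j => ?_, by simp⟩
      dsimp only
      split_ifs <;> norm_num
    · intro u hu j
      have := hw u hu
      rw [hw0, Finset.sum_eq_zero_iff_of_nonneg (fun j _ => h0 u hu j)] at this
      rw [this j (Finset.mem_univ _), hw0, zero_mul]
  · have hwn : 0 ≤ w := by
      rw [← hw (fun _ => ut 1) (fun _ => ut_pref hm _)]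
      exact Finset.sum_nonneg fun j _ => h0 _ (fun _ => ut_pref hm _) j
    refine ⟨fun u j => w⁻¹ * K u j, ⟨?_, hK.smul (inv_nonneg.2 hwn)⟩, ?_⟩
    · intro u hu
      refine ⟨fun j => mul_nonneg (inv_nonneg.2 hwn) (h0 u hu j), ?_⟩
      rw [← Finset.mul_sum, hw u hu, inv_mul_cancel₀ hw0]
    · intro u hu j
      rw [← mul_assoc, mul_inv_cancel₀ hw0, one_mul]

lemma convexComb_of {n m : ℕ} (hn : 1 ≤ n) (hm : 2 ≤ m) {J : (Fin n → Fin m → ℝ) → Fin m → ℝ}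
    (hJ : MechU J) {ι : Type} [Fintype ι] (K : ι → (Fin n → Fin m → ℝ) → Fin m → ℝ)
    (w : ι → ℝ) (hK : ∀ k, Good (K k)) (h0 : ∀ k u, IsProfileU u → ∀ j, 0 ≤ K k u j)
    (hw : ∀ k u, IsProfileU u → ∑ j, K k u j = w k)
    (hsum : ∀ u, IsProfileU u → ∀ j, J u j = ∑ k, K k u j) :
    ConvexCombOf J (fun K => MechU K ∧
      ((Unilateral K ∧ OrdinalMech K ∧ Truthful K) ∨ (Duple K ∧ Truthful K))) := by
  have := fun k => good_normalize hn hm (hK k) (h0 k) (w k) (hw k)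
  choose K' hK' hKK' using this
  have hp : IsProfileU (fun _ : Fin n => ut (1 : Perm (Fin m))) := fun _ => ut_pref hm _
  let e := (Fintype.equivFin ι).symm
  refine ⟨Fintype.card ι, fun k => K' (e k), fun k => w (e k), fun k => hK' _, fun k => ?_, ?_, ?_⟩
  · dsimp only
    rw [← hw _ _ hp]
    exact Finset.sum_nonneg fun j _ => h0 _ _ hp j
  · rw [e.sum_comp w, ← (hJ _ hp).2]
    simp only [hsum _ hp]
    rw [Finset.sum_comm]
    exact Finset.sum_congr rfl fun k _ => (hw k _ hp).symm
  · intro u hu j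
    rw [e.sum_comp (fun k => w k * K' k u j), hsum u hu]
    exact Finset.sum_congr rfl fun k _ => hKK' k u hu j

lemma good_unilateral {n m : ℕ} (i : Fin n) {U : Perm (Fin m) → Fin m → ℝ} (hU : LocMon1 U) :
    Good (fun u : Fin n → Fin m → ℝ => U (rk (u i))) := by
  left
  refine ⟨⟨i, fun u u' _ _ e => by simp only [e]⟩, fun u u' hu hu' h => ?_,
    fun u hu k v hv => ?_⟩
  · have : rk (u i) = rk (u' i) := by
      by_contra hne
      obtain ⟨x, y, h1, h2⟩ := exists_descent (rk (u' i)) (rk (u i)) hne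
      have h3 := (rk_lt (hu i).2 x y).2 h1.lt
      have h4 := (rk_lt (hu' i).2 y x).2 h2
      exact absurd ((h i x y).1 h3) h4.asymm
    simp only [this]
  · by_cases hk : i = k
    · subst hk
      exact hU.truthful (rk (u i)) (u i) (rk_lt (hu i).2) _
    · simp [hk]

lemma mono_of_insert {n : ℕ} {D : Finset (Fin n) → ℝ} (h : ∀ i T, i ∉ T → D T ≤ D (insert i T))
    {S T : Finset (Fin n)} (hST : S ⊆ T) : D S ≤ D T := by
  have key : ∀ R : Finset (Fin n), D S ≤ D (S ∪ R) := by
    intro R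
    induction R using Finset.induction_on with
    | empty => simp
    | insert j R hj ih =>
      rw [Finset.union_insert]
      by_cases hj' : j ∈ S ∪ R
      · rwa [Finset.insert_eq_of_mem hj']
      · exact ih.trans (h _ _ hj')
  have := key T
  rwa [Finset.union_eq_right.2 hST] at this

lemma good_duple {n m : ℕ} (hn : 1 ≤ n) (D : Fin m → Fin m → Finset (Fin n) → ℝ)
    (hD : ∀ x y, x < y → D x y ∅ = 0 ∧ (∀ i T, i ∉ T → D x y T ≤ D x y (insert i T)))
    (p : Fin m × Fin m) :
    Good (fun u : Fin n → Fin m → ℝ => GG D p (TT p.1 p.2 (fun i => rk (u i)))) := by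
  obtain ⟨x, y⟩ := p
  by_cases hxy : x < y
  swap
  · have : (fun u : Fin n → Fin m → ℝ => GG D (x, y) (TT x y (fun i => rk (u i))))
        = fun _ => fun _ => 0 := by
      funext u z; simp [GG, hxy]
    simp only [this]
    exact good_const hn _
  right
  refine ⟨⟨x, y, hxy.ne, fun u hu j hx hy => ?_⟩, fun u hu i v hv => ?_⟩
  · simp [GG, hxy, hy, dl_other hx hy]
  · dsimp only
    set T := TT x y (fun k => rk (u k)) with hT
    set T' := TT x y (fun k => rk (update u i v k)) with hT'
    have hval : ∀ S : Finset (Fin n), ∑ j, GG D (x, y) S j * u i j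
        = D x y Finset.univ * u i y + D x y S * (u i x - u i y) := by
      intro S
      simp [GG, hxy, dl, add_mul, mul_sub, sub_mul, Finset.sum_add_distrib,
        Finset.sum_sub_distrib]
    rw [hval, hval]
    have hmem : ∀ k, k ≠ i → (k ∈ T ↔ k ∈ T') := by
      intro k hk; simp [hT, hT', TT, hk]
    by_cases hi : u i y < u i x
    · have hiT : i ∈ T := by
        simp only [hT, TT, Finset.mem_filter, Finset.mem_univ, true_and]
        exact (rk_lt (hu i).2 y x).1 hi
      have hsub : T' ⊆ T := by
        intro k hk
        by_cases hki : k = i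
        · rw [hki]; exact hiT
        · exact (hmem k hki).2 hk
      have := mono_of_insert (hD x y hxy).2 hsub
      nlinarith
    · have hiT : i ∉ T := by
        simp only [hT, TT, Finset.mem_filter, Finset.mem_univ, true_and]
        exact fun h => hi ((rk_lt (hu i).2 y x).2 h)
      have hsub : T ⊆ T' := by
        intro k hk
        by_cases hki : k = i
        · rw [hki] at hk; exact absurd hk hiT
        · exact (hmem k hki).1 hk
      have := mono_of_insert (hD x y hxy).2 hsub
      push Not at hi
      nlinarith

end GibbardAux

/-- Gibbard 1977: every ordinal truthful mechanism on tie-free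
profiles is a convex combination of mechanisms each of which is either
unilateral, ordinal and truthful, or duple and truthful. -/
theorem stmt2 (n m : ℕ) (hn : 1 ≤ n) (hm : 2 ≤ m)
    (J : (Fin n → Fin m → ℝ) → Fin m → ℝ)
    (hJ : MechU J) (hOrd : OrdinalMech J) (hT : Truthful J) :
    ConvexCombOf J (fun K => MechU K ∧
      ((Unilateral K ∧ OrdinalMech K ∧ Truthful K) ∨ (Duple K ∧ Truthful K))) := by
  open GibbardAux in
  obtain ⟨D, U, c, hD, hU, hU0, hc, hdec⟩ := (toF_locMon hm hJ hOrd hT).decomp (by omega)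
    (fun P z => (hJ _ (fun i => ut_pref hm _)).1 z)
  open GibbardAux in
  refine convexComb_of hn hm hJ (ι := Unit ⊕ Fin n ⊕ Fin m × Fin m)
    (fun k u => match k with
      | Sum.inl _ => c
      | Sum.inr (Sum.inl i) => U i (rk (u i))
      | Sum.inr (Sum.inr p) => GG D p (TT p.1 p.2 (fun i => rk (u i))))
    (fun k => match k with
      | Sum.inl _ => ∑ z, c z
      | Sum.inr (Sum.inl i) => ∑ z, U i 1 z
      | Sum.inr (Sum.inr p) => if p.1 < p.2 then D p.1 p.2 Finset.univ else 0) ?_ ?_ ?_ ?_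
  · rintro (_ | i | p)
    · exact GibbardAux.good_const hn c
    · exact GibbardAux.good_unilateral i (hU i)
    · exact GibbardAux.good_duple hn D hD p
  · rintro (_ | i | p) u hu z
    · exact hc z
    · exact hU0 _ _ _
    · simp only [GibbardAux.GG]
      split_ifs with hp hz
      · rw [hz, GibbardAux.dl_right hp.ne]
        have := GibbardAux.mono_of_insert (hD _ _ hp).2
          (Finset.subset_univ (GibbardAux.TT p.1 p.2 (fun i => GibbardAux.rk (u i))))
        linarith
      · have h1 := GibbardAux.mono_of_insert (hD _ _ hp).2
          (Finset.empty_subset (GibbardAux.TT p.1 p.2 (fun i => GibbardAux.rk (u i))))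
        rw [(hD _ _ hp).1] at h1
        rw [zero_add]
        refine mul_nonneg h1 ?_
        simp only [GibbardAux.dl, hz, if_false, sub_zero]
        split_ifs <;> norm_num
      · exact le_rfl
  · rintro (_ | i | p) u hu
    · rfl
    · exact (hU i).sum_eq _ _
    · simp only [GibbardAux.GG]
      split_ifs with hp
      · simp [Finset.sum_add_distrib, ← Finset.mul_sum, GibbardAux.dl, Finset.sum_sub_distrib]
      · simp
  · intro u hu z
    rw [GibbardAux.toF_eq hm hOrd hu (P := fun i => GibbardAux.rk (u i))
      (fun i => GibbardAux.rk_lt (hu i).2), hdec]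
    simp [add_assoc]
end
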